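/- arXiv:1412.4953 — 3 statements merged into one kernel-verified Lean document; each statement's English description precedes it below -/
import Mathlib

section
/- Let k be a field and let R = R_0 ⊕ R_1 ⊕ ⋯ be a graded k-algebra with R_0 = k × ⋯ × k. Let f: L → M be a degree-zero monomorphism between two non-projective graded R-modules L and M generated in the same degree. Then there exist induced degree-zero monomorphisms Ωf: ΩL → ΩM between the first syzygies and l: P_L → P_M between the projective covers. -/
/-!
The minimality of the covers makes `pL` injective on the degree-`e` piece of `PL`, so any
degree-zero lift `l` of `f ∘ pL` through `pM` restricts to an injective `R₀`-linear map
`(PL)ₑ → (PM)ₑ`.  As `R₀ = k × ⋯ × k` is semisimple, this restriction has an `R₀`-linear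
retraction `(PM)ₑ → (PL)ₑ`.  Since `PM` is projective and generated in degree `e`, it behaves
like `R ⊗_{R₀} (PM)ₑ`: the retraction extends to an `R`-linear map `s : PM → PL`
(`ModuleGrading.exists_extension`).  The composite `s ∘ l` is the identity on `(PL)ₑ`, which
generates `PL`, hence `s ∘ l = id` and `l` is injective.

Both `l` and `s` are obtained from ungraded linear maps by passing to the degree-zero part
(`ModuleGrading.exists_degreeZeroPart`).
-/

/-- A grading by `ℤ` on a module `M` over the graded `k`-algebra `R = ⊕ᵢ Rᵢ` (with
grading `𝒜 : ℕ → Submodule k R`): `M = ⊕ⱼ Mⱼ` as `k`-vector spaces, compatibly with the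
grading of `R`. -/
structure ModuleGrading (k : Type) [Field k] (R : Type) [Ring R] [Algebra k R]
    (𝒜 : ℕ → Submodule k R)
    (M : Type) [AddCommGroup M] [Module R M] [Module k M] [IsScalarTower k R M] where
  piece : ℤ → Submodule k M
  internal : DirectSum.IsInternal piece
  smul_mem : ∀ {i : ℕ} {j : ℤ} {r : R} {x : M},
      r ∈ 𝒜 i → x ∈ piece j → r • x ∈ piece ((i : ℤ) + j)

variable (k : Type) [Field k] (R : Type) [Ring R] [Algebra k R]
  (𝒜 : ℕ → Submodule k R)

/-- A linear (graded projective) resolution `⋯ → P¹ → P⁰ → M → 0` of a graded module `M`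
over the graded algebra `R`: each `Pⁿ` is a finitely generated graded projective module
generated in degree `n`, and all differentials (and the augmentation) are degree-zero
homomorphisms.  (A graded module `M` generated in degree `0` is a *linear module* when
such a resolution exists; in particular this resolution is then minimal.) -/
structure LinearResolution (M : Type) [AddCommGroup M] [Module R M] [Module k M]
    [IsScalarTower k R M] (ℳ : ModuleGrading k R 𝒜 M) where
  P : ℕ → Type
  [acg : ∀ n, AddCommGroup (P n)]
  [modR : ∀ n, Module R (P n)]
  [modk : ∀ n, Module k (P n)]
  [tower : ∀ n, IsScalarTower k R (P n)]
  grading : ∀ n, ModuleGrading k R 𝒜 (P n)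
  projective : ∀ n, Module.Projective R (P n)
  finite : ∀ n, Module.Finite R (P n)
  /-- `Pⁿ` is generated in degree `n`. -/
  generated : ∀ n : ℕ, Submodule.span R ((grading n).piece (n : ℤ) : Set (P n)) = ⊤
  vanish : ∀ (n : ℕ) (j : ℤ), j < (n : ℤ) → (grading n).piece j = ⊥
  d : ∀ n, P (n + 1) →ₗ[R] P n
  augment : P 0 →ₗ[R] M
  d_degree : ∀ (n : ℕ) {j : ℤ} {x : P (n + 1)},
      x ∈ (grading (n + 1)).piece j → d n x ∈ (grading n).piece j
  augment_degree : ∀ {j : ℤ} {x : P 0}, x ∈ (grading 0).piece j → augment x ∈ ℳ.piece j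
  augment_surjective : Function.Surjective augment
  exact_zero : LinearMap.ker augment = LinearMap.range (d 0)
  exact_succ : ∀ n, LinearMap.ker (d n) = LinearMap.range (d (n + 1))

attribute [instance] LinearResolution.acg LinearResolution.modR LinearResolution.modk
  LinearResolution.tower

/-- The degree-zero part `R₀ = 𝒜 0` of a graded algebra, as a `k`-subalgebra. -/
def gradeZeroSubalgebra [GradedAlgebra 𝒜] : Subalgebra k R where
  carrier := 𝒜 0
  mul_mem' := fun {a b} ha hb => by simpa using SetLike.mul_mem_graded ha hb
  one_mem' := SetLike.one_mem_graded 𝒜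
  add_mem' := fun {a b} ha hb => (𝒜 0).add_mem ha hb
  zero_mem' := (𝒜 0).zero_mem
  algebraMap_mem' := fun c => by
    simpa [Algebra.algebraMap_eq_smul_one] using (𝒜 0).smul_mem c (SetLike.one_mem_graded 𝒜)

/-- The graded radical `r = R₁ ⊕ R₂ ⊕ ⋯` of the graded algebra `R`, as a left ideal. -/
def gradedRadical : Ideal R :=
  Submodule.span R {x : R | ∃ i : ℕ, 0 < i ∧ x ∈ 𝒜 i}

/-- `(R, 𝒜)` is a *Koszul algebra* over `k`: `R₀` is a finite product of copies of `k`,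
and `R₀ = R/r`, viewed as a graded `R`-module (with the grading induced from `𝒜`),
admits a linear graded projective resolution. -/
def IsKoszulAlgebra [GradedAlgebra 𝒜] : Prop :=
  (∃ c : ℕ, Nonempty (gradeZeroSubalgebra k R 𝒜 ≃ₐ[k] (Fin c → k))) ∧
  ∃ ℳ : ModuleGrading k R 𝒜 (R ⧸ gradedRadical k R 𝒜),
    (∀ i : ℕ, ℳ.piece (i : ℤ) =
      (𝒜 i).map ((gradedRadical k R 𝒜).mkQ.restrictScalars k)) ∧
    Nonempty (LinearResolution k R 𝒜 (R ⧸ gradedRadical k R 𝒜) ℳ)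

/-- A module is indecomposable if it is nonzero and is not the internal direct sum of two
nonzero submodules. -/
def IsIndecomposableModule (R M : Type) [Ring R] [AddCommGroup M] [Module R M] : Prop :=
  Nontrivial M ∧ ∀ N₁ N₂ : Submodule R M, IsCompl N₁ N₂ → N₁ = ⊥ ∨ N₂ = ⊥

variable {k R 𝒜}

namespace LinearResolution

variable {M : Type} [AddCommGroup M] [Module R M] [Module k M] [IsScalarTower k R M]
  {ℳ : ModuleGrading k R 𝒜 M}

/-- `η : Pⁿ → M` is a cocycle: `η ∘ d_{n+1} = 0`, i.e. `η` represents an element of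
`Ext^n_R(M,M)`. -/
def IsCocycle (res : LinearResolution k R 𝒜 M ℳ) (n : ℕ) (η : res.P n →ₗ[R] M) : Prop :=
  η.comp (res.d n) = 0

/-- `η : Pⁿ → M` is a coboundary, i.e. `η` represents the zero element of
`Ext^n_R(M,M)`. -/
def IsCoboundary (res : LinearResolution k R 𝒜 M ℳ) :
    ∀ n : ℕ, (res.P n →ₗ[R] M) → Prop
  | 0, η => η = 0
  | n + 1, η => ∃ h : res.P n →ₗ[R] M, η = h.comp (res.d n)

/-- `η : Pⁿ → M` is a homomorphism of degree `s`. -/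
def HasDegree (res : LinearResolution k R 𝒜 M ℳ) (n : ℕ) (η : res.P n →ₗ[R] M)
    (s : ℤ) : Prop :=
  ∀ {j : ℤ} {x : res.P n}, x ∈ (res.grading n).piece j → η x ∈ ℳ.piece (j + s)

/-- The family `l i : P^{n+i} → P^i` is a family of liftings of `η : Pⁿ → M` along the
resolution: `ε ∘ l⁰ = η` and `d ∘ l^{i+1} = l^i ∘ d`. -/
structure IsLifting (res : LinearResolution k R 𝒜 M ℳ) (n : ℕ) (η : res.P n →ₗ[R] M)
    (l : ∀ i, res.P (n + i) →ₗ[R] res.P i) : Prop where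
  lift_zero : res.augment.comp (l 0) = η
  lift_comm : ∀ i, (res.d i).comp (l (i + 1)) = (l i).comp (res.d (n + i))

/-- The liftings `l i : P^{n+i} → P^i` of a degree `-n` cocycle are matrices with entries
in `R₀`, i.e. each `l i` is a homomorphism of degree `-n`. -/
def LiftingEntriesInDegreeZero (res : LinearResolution k R 𝒜 M ℳ) (n : ℕ)
    (l : ∀ i, res.P (n + i) →ₗ[R] res.P i) : Prop :=
  ∀ (i : ℕ) {j : ℤ} {x : res.P (n + i)},
    x ∈ (res.grading (n + i)).piece j → l i x ∈ (res.grading i).piece (j - (n : ℤ))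

end LinearResolution

namespace ModuleGrading

variable {M N : Type}
  [AddCommGroup M] [Module R M] [Module k M] [IsScalarTower k R M]
  [AddCommGroup N] [Module R N] [Module k N] [IsScalarTower k R N]

/-- The projection of a graded module onto its degree-`j` piece, as an endomorphism of the
module. -/
noncomputable def comp (g : ModuleGrading k R 𝒜 M) (j : ℤ) : M →ₗ[k] M :=
  (g.piece j).subtype ∘ₗ DirectSum.component k ℤ (fun i => g.piece i) j ∘ₗ
    (LinearEquiv.ofBijective (DirectSum.coeLinearMap g.piece) g.internal).symm.toLinearMap

lemma comp_mem (g : ModuleGrading k R 𝒜 M) (j : ℤ) (x : M) : g.comp j x ∈ g.piece j :=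
  Subtype.property _

lemma comp_of_mem (g : ModuleGrading k R 𝒜 M) {j : ℤ} {x : M} (hx : x ∈ g.piece j) :
    g.comp j x = x :=
  congrArg Subtype.val (g.internal.ofBijective_coeLinearMap_of_mem hx)

lemma comp_of_mem_ne (g : ModuleGrading k R 𝒜 M) {i j : ℤ} (hij : i ≠ j) {x : M}
    (hx : x ∈ g.piece i) : g.comp j x = 0 :=
  congrArg Subtype.val (g.internal.ofBijective_coeLinearMap_of_mem_ne hij hx)

lemma induction (g : ModuleGrading k R 𝒜 M) {motive : M → Prop}
    (mem : ∀ j, ∀ x ∈ g.piece j, motive x) (zero : motive 0)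
    (add : ∀ x y, motive x → motive y → motive (x + y)) (x : M) : motive x :=
  Submodule.iSup_induction g.piece (motive := motive)
    (by rw [g.internal.submodule_iSup_eq_top]; trivial) mem zero add

lemma comp_smul (g : ModuleGrading k R 𝒜 M) {i : ℕ} {r : R} (hr : r ∈ 𝒜 i) (j : ℤ) (x : M) :
    g.comp (i + j) (r • x) = r • g.comp j x := by
  induction x using g.induction with
  | mem m x hx =>
    by_cases h : m = j
    · subst h
      rw [g.comp_of_mem hx, g.comp_of_mem (g.smul_mem hr hx)]
    · rw [g.comp_of_mem_ne h hx, g.comp_of_mem_ne (by omega) (g.smul_mem hr hx), smul_zero]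
  | zero => simp
  | add x y hx hy => rw [smul_add, map_add, hx, hy, map_add, smul_add]

/-- On a module element of degree `e`, the degree-`e` component of `r • y` only sees the
degree-zero component of `r`. -/
lemma comp_smul_of_mem [GradedAlgebra 𝒜] (g : ModuleGrading k R 𝒜 M) {e : ℤ} (r : R) {y : M}
    (hy : y ∈ g.piece e) :
    g.comp e (r • y) = (DirectSum.decompose 𝒜 r 0 : R) • y := by
  induction r using DirectSum.Decomposition.inductionOn 𝒜 with
  | zero => simp
  | @homogeneous i m =>
    have hm := g.smul_mem m.2 hy
    by_cases h : i = 0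
    · subst h
      rw [DirectSum.decompose_of_mem_same 𝒜 m.2]
      exact g.comp_of_mem (by simpa using hm)
    · rw [DirectSum.decompose_of_mem_ne 𝒜 m.2 h, zero_smul]
      exact g.comp_of_mem_ne (by omega) hm
  | add a b ha hb => simp [add_smul, ha, hb]

/-- The degree-zero part of an arbitrary `R`-linear map between graded modules is again
`R`-linear. -/
lemma exists_degreeZeroPart [GradedAlgebra 𝒜] (gM : ModuleGrading k R 𝒜 M)
    (gN : ModuleGrading k R 𝒜 N) (h : M →ₗ[R] N) :
    ∃ h₀ : M →ₗ[R] N, ∀ j, ∀ x ∈ gM.piece j, h₀ x = gN.comp j (h x) := by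
  let q : M →ₗ[k] N :=
    DirectSum.toModule k ℤ N
      (fun j => gN.comp j ∘ₗ h.restrictScalars k ∘ₗ (gM.piece j).subtype) ∘ₗ
    (LinearEquiv.ofBijective (DirectSum.coeLinearMap gM.piece) gM.internal).symm.toLinearMap
  have hq : ∀ j, ∀ x ∈ gM.piece j, q x = gN.comp j (h x) := by
    intro j x hx
    have hx' : (LinearEquiv.ofBijective (DirectSum.coeLinearMap gM.piece) gM.internal).symm x =
        DirectSum.lof k ℤ (fun i => gM.piece i) j ⟨x, hx⟩ := by
      rw [LinearEquiv.symm_apply_eq]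
      exact (DirectSum.coeLinearMap_lof gM.piece j ⟨x, hx⟩).symm
    rw [LinearMap.comp_apply, LinearEquiv.coe_coe, hx', DirectSum.toModule_lof]
    rfl
  have hsmul : ∀ (r : R) (x : M), q (r • x) = r • q x := by
    intro r x
    induction r using DirectSum.Decomposition.inductionOn 𝒜 with
    | zero => simp
    | @homogeneous i m =>
      induction x using gM.induction with
      | mem j x hx =>
        rw [hq _ _ (gM.smul_mem m.2 hx), hq _ _ hx, map_smul, gN.comp_smul m.2]
      | zero => simp
      | add x y hx hy => rw [smul_add, map_add, hx, hy, map_add, smul_add]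
    | add a b ha hb => rw [add_smul, map_add, ha, hb, add_smul]
  exact ⟨{ toFun := q, map_add' := q.map_add, map_smul' := hsmul }, hq⟩

/-- The degree-`e` piece of a graded `R`-module, as an `R₀`-submodule. -/
def pieceZero [GradedAlgebra 𝒜] (g : ModuleGrading k R 𝒜 M) (e : ℤ) :
    Submodule (gradeZeroSubalgebra k R 𝒜) M where
  carrier := g.piece e
  add_mem' := (g.piece e).add_mem
  zero_mem' := (g.piece e).zero_mem
  smul_mem' := fun c x hx => by
    have h := g.smul_mem (i := 0) c.2 hx
    rwa [Nat.cast_zero, zero_add] at h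

/-- An `R₀`-linear map out of the degree-`e` piece of a projective module generated in degree
`e`, with values in a degree-`e` piece, extends to an `R`-linear map.  With `F` the free module
on the degree-`e` piece and `σ` a section of `F → M`, the extension is the degree-zero part of
`M → F → N`. -/
lemma exists_extension [GradedAlgebra 𝒜] (gM : ModuleGrading k R 𝒜 M)
    (gN : ModuleGrading k R 𝒜 N) (e : ℤ) (hproj : Module.Projective R M)
    (hgen : Submodule.span R (gM.piece e : Set M) = ⊤)
    (φ : gM.pieceZero e →ₗ[gradeZeroSubalgebra k R 𝒜] gN.pieceZero e) :
    ∃ s : M →ₗ[R] N, ∀ x : gM.pieceZero e, s x = φ x := by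
  let π : (gM.pieceZero e →₀ R) →ₗ[R] M := Finsupp.linearCombination R Subtype.val
  let Φ : (gM.pieceZero e →₀ R) →ₗ[R] N := Finsupp.linearCombination R (fun y => (φ y : N))
  have hπ : LinearMap.range π = ⊤ := by
    rw [Finsupp.range_linearCombination, Subtype.range_coe]
    exact hgen
  obtain ⟨σ, hσ⟩ := Module.projective_lifting_property π LinearMap.id
    (LinearMap.range_eq_top.1 hπ)
  -- In degree `e`, `Φ` factors as `φ` after `π`.
  have key : ∀ v, ∃ y : gM.pieceZero e, gM.comp e (π v) = y ∧ gN.comp e (Φ v) = φ y := by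
    intro v
    induction v using Finsupp.induction_linear with
    | zero => exact ⟨0, by simp, by simp⟩
    | add v w hv hw =>
      obtain ⟨y, hy, hy'⟩ := hv
      obtain ⟨z, hz, hz'⟩ := hw
      exact ⟨y + z, by simp [hy, hz], by simp [hy', hz']⟩
    | single y r =>
      let c : gradeZeroSubalgebra k R 𝒜 := ⟨DirectSum.decompose 𝒜 r 0, Subtype.property _⟩
      refine ⟨c • y, ?_, ?_⟩
      · rw [Finsupp.linearCombination_single, gM.comp_smul_of_mem r y.2]
        rfl
      · rw [Finsupp.linearCombination_single, gN.comp_smul_of_mem r (φ y).2, map_smul]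
        rfl
  obtain ⟨s, hs⟩ := exists_degreeZeroPart gM gN (Φ ∘ₗ σ)
  refine ⟨s, fun x => ?_⟩
  obtain ⟨y, hy, hy'⟩ := key (σ x)
  have hσx : π (σ x) = x := LinearMap.congr_fun hσ (x : M)
  rw [hσx, gM.comp_of_mem x.2] at hy
  rw [hs e x x.2, LinearMap.comp_apply, hy', Subtype.ext hy]

end ModuleGrading

/-- **Proposition 3.7.** Let `k` be a field and let `R = R₀ ⊕ R₁ ⊕ ⋯` be a graded
`k`-algebra with `R₀ = k × ⋯ × k`.  Let `f : L → M` be a degree-zero monomorphism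
between two non-projective graded `R`-modules `L` and `M` generated in the same degree
`e`.  Let `pL : P_L → L` and `pM : P_M → M` be projective covers (`P_L`, `P_M` graded
projective modules generated in degree `e`, the surjections `pL`, `pM` of degree zero
with kernels — the syzygies `Ω L`, `Ω M` — contained in the radical, i.e. in the part of
degree `> e`).  Then there exist induced degree-zero monomorphisms
`Ω f : Ω L → Ω M` and `l : P_L → P_M`: a degree-zero `l` with `pM ∘ l = f ∘ pL` which is
injective and carries `Ω L = ker pL` into `Ω M = ker pM` (hence restricts to a
degree-zero monomorphism `Ω L → Ω M`). -/
theorem exists_injective_lift_of_injective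
    {k R : Type} [Field k] [Ring R] [Algebra k R] {𝒜 : ℕ → Submodule k R}
    [GradedAlgebra 𝒜]
    (hR0 : ∃ c : ℕ, Nonempty (gradeZeroSubalgebra k R 𝒜 ≃ₐ[k] (Fin c → k)))
    {L M PL PM : Type}
    [AddCommGroup L] [Module R L] [Module k L] [IsScalarTower k R L]
    [AddCommGroup M] [Module R M] [Module k M] [IsScalarTower k R M]
    [AddCommGroup PL] [Module R PL] [Module k PL] [IsScalarTower k R PL]
    [AddCommGroup PM] [Module R PM] [Module k PM] [IsScalarTower k R PM]
    (gL : ModuleGrading k R 𝒜 L) (gM : ModuleGrading k R 𝒜 M)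
    (gPL : ModuleGrading k R 𝒜 PL) (gPM : ModuleGrading k R 𝒜 PM)
    (e : ℤ)
    (hLgen : Submodule.span R ((gL.piece e : Set L)) = ⊤)
    (hMgen : Submodule.span R ((gM.piece e : Set M)) = ⊤)
    (hLnp : ¬ Module.Projective R L) (hMnp : ¬ Module.Projective R M)
    (f : L →ₗ[R] M) (hfdeg : ∀ (j : ℤ), ∀ x ∈ gL.piece j, f x ∈ gM.piece j)
    (hfinj : Function.Injective f)
    (hPLproj : Module.Projective R PL) (hPMproj : Module.Projective R PM)
    (hPLgen : Submodule.span R ((gPL.piece e : Set PL)) = ⊤)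
    (hPMgen : Submodule.span R ((gPM.piece e : Set PM)) = ⊤)
    (pL : PL →ₗ[R] L) (pM : PM →ₗ[R] M)
    (hpLdeg : ∀ (j : ℤ), ∀ x ∈ gPL.piece j, pL x ∈ gL.piece j)
    (hpMdeg : ∀ (j : ℤ), ∀ x ∈ gPM.piece j, pM x ∈ gM.piece j)
    (hpLsurj : Function.Surjective pL) (hpMsurj : Function.Surjective pM)
    (hpLmin : ∀ x ∈ LinearMap.ker pL,
      x ∈ (⨆ (j : ℤ) (_ : e < j), gPL.piece j : Submodule k PL))
    (hpMmin : ∀ x ∈ LinearMap.ker pM,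
      x ∈ (⨆ (j : ℤ) (_ : e < j), gPM.piece j : Submodule k PM)) :
    ∃ l : PL →ₗ[R] PM,
      (∀ (j : ℤ), ∀ x ∈ gPL.piece j, l x ∈ gPM.piece j) ∧
      pM.comp l = f.comp pL ∧
      Function.Injective l ∧
      (∀ x ∈ LinearMap.ker pL, l x ∈ LinearMap.ker pM) ∧
      Function.Injective (fun x : ↥(LinearMap.ker pL) => l ↑x) := by
  -- A degree-zero lift of `f ∘ pL` through `pM`.
  obtain ⟨l', hl'⟩ := Module.projective_lifting_property pM (f.comp pL) hpMsurj
  obtain ⟨l, hl⟩ := ModuleGrading.exists_degreeZeroPart gPL gPM l'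
  have hldeg : ∀ (j : ℤ), ∀ x ∈ gPL.piece j, l x ∈ gPM.piece j := by
    intro j x hx
    rw [hl j x hx]
    exact gPM.comp_mem j _
  have hpMcomp : ∀ (j : ℤ) (y : PM), pM (gPM.comp j y) = gM.comp j (pM y) := by
    intro j y
    induction y using gPM.induction with
    | mem i y hy =>
      by_cases h : i = j
      · subst h
        rw [gPM.comp_of_mem hy, gM.comp_of_mem (hpMdeg i y hy)]
      · rw [gPM.comp_of_mem_ne h hy, gM.comp_of_mem_ne h (hpMdeg i y hy), map_zero]
    | zero => simp
    | add x y hx hy => simp [hx, hy]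
  have hcomm : ∀ x, pM (l x) = f (pL x) := by
    intro x
    induction x using gPL.induction with
    | mem j x hx =>
      have h : pM (l' x) = f (pL x) := LinearMap.congr_fun hl' x
      rw [hl j x hx, hpMcomp, h, gM.comp_of_mem (hfdeg j _ (hpLdeg j x hx))]
    | zero => simp
    | add x y hx hy => simp [hx, hy]
  have hzero : ∀ x ∈ gPL.piece e, pL x = 0 → x = 0 := by
    intro x hx hx0
    have hle : (⨆ (j : ℤ) (_ : e < j), gPL.piece j) ≤ LinearMap.ker (gPL.comp e) :=
      iSup₂_le fun j hj y hy => gPL.comp_of_mem_ne hj.ne' hy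
    rw [← gPL.comp_of_mem hx]
    exact hle (hpLmin x hx0)
  obtain ⟨c, ⟨ψ⟩⟩ := hR0
  have : IsSemisimpleRing (gradeZeroSubalgebra k R 𝒜) := ψ.symm.toRingEquiv.isSemisimpleRing
  let lₑ : gPL.pieceZero e →ₗ[gradeZeroSubalgebra k R 𝒜] gPM.pieceZero e :=
    { toFun := fun x => ⟨l x, hldeg e x x.2⟩
      map_add' := fun x y => Subtype.ext (map_add l (x : PL) y)
      map_smul' := fun r x => Subtype.ext (map_smul l (r : R) (x : PL)) }
  have hlₑ : Function.Injective lₑ := by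
    rw [injective_iff_map_eq_zero]
    intro x hx
    have hlx : l x = 0 := congrArg Subtype.val hx
    refine Subtype.ext (hzero x x.2 (hfinj ?_))
    rw [← hcomm, hlx, map_zero, map_zero]
  obtain ⟨φ, hφ⟩ := IsSemisimpleModule.extension_property lₑ hlₑ LinearMap.id
  obtain ⟨s, hs⟩ := gPM.exists_extension gPL e hPMproj hPMgen φ
  have hsl : s.comp l = LinearMap.id := by
    refine LinearMap.ext_on hPLgen fun x hx => ?_
    have h₁ : s (l x) = φ (lₑ ⟨x, hx⟩) := hs (lₑ ⟨x, hx⟩)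
    have h₂ : φ (lₑ ⟨x, hx⟩) = ⟨x, hx⟩ := LinearMap.congr_fun hφ ⟨x, hx⟩
    rw [LinearMap.comp_apply, h₁, h₂]
    rfl
  have hinj : Function.Injective l :=
    Function.LeftInverse.injective (g := s) fun x => LinearMap.congr_fun hsl x
  refine ⟨l, hldeg, LinearMap.ext hcomm, hinj, fun x hx => ?_, hinj.comp Subtype.val_injective⟩
  rw [LinearMap.mem_ker, hcomm, LinearMap.mem_ker.1 hx, map_zero]
end

section
/- Let R be a finite-dimensional selfinjective algebra over a field k and let M be a finitely generated indecomposable R-module. Then the following are equivalent: (a) M is periodic; (b) M has complexity one and there exists a non-nilpotent element of positive degree in the Ext-algebra Ext*_R(M,M). -/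
/-!
Let `Ωⁱ M` be the syzygies in a minimal resolution `P` of `M`.

Periodic implies complexity one with a non-nilpotent class: composing `P^{m+1} → Ω^{m+1} M` with an
isomorphism `Ω^{m+1} M ≃ M` gives a surjective cocycle `f`.  Its liftings `P^{m+1+i} → P^i` compare
two minimal resolutions of `M`, hence are bijective (`MinProjRes.bijective_lift`).  So the lengths of
the `P^i`, and with them the Betti numbers, are bounded, and the powers of `f` are represented by
surjective cocycles.  These are no coboundaries, because a coboundary factors through `d`, whose
image lies in the radical (`MinProjRes.not_isCoboundary_of_surjective`).

Conversely, an indecomposable projective module is a quotient of `R`, so bounded Betti numbers bound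
the lengths of the `Ωⁱ M`.  As `R` is selfinjective, the `P^i` are injective, and Fitting's lemma
shows that all `Ωⁱ M` are indecomposable (`isIndecomposable_ker`).  A non-nilpotent class of degree
`n ≥ 1` lifts to maps `Ω^{n(j+1)} M → Ω^{nj} M` whose composites into `M` are all nonzero; otherwise
some power would be represented by the zero cocycle.  By a Harada–Sai type argument on modules of
bounded length (`exists_bijective_of_tower`) one of these maps is an isomorphism.  Finally, `Ω`
reflects isomorphisms between indecomposable modules with nonzero syzygies (`equiv_of_ker_equiv`),
which brings the isomorphism `Ω^{n+nj} M ≃ Ω^{nj} M` down to `Ωⁿ M ≃ M`.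
-/

/-- The radical of a module: the intersection of its maximal (proper) submodules. -/
def moduleRadical (R M : Type) [Ring R] [AddCommGroup M] [Module R M] :
    Submodule R M :=
  ⨅ (N : Submodule R M) (_ : IsCoatom N), N

/-- A minimal projective resolution `⋯ → P¹ → P⁰ → M → 0` of `M` by finitely generated
projective modules: each kernel is contained in the radical of the corresponding
projective (so each `Pⁿ` is a projective cover of the `n`-th syzygy
`Ωⁿ M`, and `Ω^{n+1} M = range (d n) = ker` of the previous map). -/
structure MinProjRes (R M : Type) [Ring R] [AddCommGroup M] [Module R M] where
  P : ℕ → Type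
  [acg : ∀ n, AddCommGroup (P n)]
  [modR : ∀ n, Module R (P n)]
  projective : ∀ n, Module.Projective R (P n)
  finite : ∀ n, Module.Finite R (P n)
  d : ∀ n, P (n + 1) →ₗ[R] P n
  augment : P 0 →ₗ[R] M
  augment_surjective : Function.Surjective augment
  exact_zero : LinearMap.ker augment = LinearMap.range (d 0)
  exact_succ : ∀ n, LinearMap.ker (d n) = LinearMap.range (d (n + 1))
  minimal_zero : LinearMap.ker augment ≤ moduleRadical R (P 0)
  minimal_succ : ∀ n, LinearMap.ker (d n) ≤ moduleRadical R (P (n + 1))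

attribute [instance] MinProjRes.acg MinProjRes.modR

/-- `M` is a periodic module: `Ωⁿ M ≅ M` for some `n ≥ 1`, where `Ω` is the syzygy in a
minimal projective resolution (`Ω^{m+1} M = range (d m)`). -/
def IsPeriodicModule (R M : Type) [Ring R] [AddCommGroup M] [Module R M] : Prop :=
  ∃ (res : MinProjRes R M) (m : ℕ),
    Nonempty (↥(LinearMap.range (res.d m)) ≃ₗ[R] M)

/-- The `n`-th Betti number of `M` is `b`: the `n`-th term of a minimal projective
resolution of `M` is a direct sum of `b` (nonzero) indecomposable submodules. -/
def HasBettiNumber {R M : Type} [Ring R] [AddCommGroup M] [Module R M]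
    (res : MinProjRes R M) (n b : ℕ) : Prop :=
  ∃ N : Fin b → Submodule R (res.P n), DirectSum.IsInternal N ∧
    ∀ i, IsIndecomposableModule R ↥(N i)

/-- `M` has complexity one: the Betti numbers of (a minimal projective resolution of) `M`
are bounded. -/
def HasComplexityOne (R M : Type) [Ring R] [AddCommGroup M] [Module R M] : Prop :=
  ∃ res : MinProjRes R M, ∃ C : ℕ, ∀ n, ∃ b ≤ C, HasBettiNumber res n b

namespace MinProjRes

variable {R M : Type} [Ring R] [AddCommGroup M] [Module R M]

/-- `f : Pⁿ → M` is a cocycle (`f ∘ d = 0`), i.e. it represents an element of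
`Ext^n_R(M,M)`. -/
def IsCocycle (res : MinProjRes R M) (n : ℕ) (f : res.P n →ₗ[R] M) : Prop :=
  f.comp (res.d n) = 0

/-- `f : Pⁿ → M` is a coboundary, i.e. it represents the zero element of
`Ext^n_R(M,M)`. -/
def IsCoboundary (res : MinProjRes R M) : ∀ n : ℕ, (res.P n →ₗ[R] M) → Prop
  | 0, f => f = 0
  | n + 1, f => ∃ h : res.P n →ₗ[R] M, f = h.comp (res.d n)

/-- The family `l i : P^{n+i} → P^i` is a family of liftings of `f : Pⁿ → M` along the
resolution: `ε ∘ l⁰ = f` and `d ∘ l^{i+1} = l^i ∘ d`.  (The Yoneda product of Ext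
classes is computed by composing representing cocycles with such liftings.) -/
structure IsLifting (res : MinProjRes R M) (n : ℕ) (f : res.P n →ₗ[R] M)
    (l : ∀ i, res.P (n + i) →ₗ[R] res.P i) : Prop where
  lift_zero : res.augment.comp (l 0) = f
  lift_comm : ∀ i, (res.d i).comp (l (i + 1)) = (l i).comp (res.d (n + i))

end MinProjRes

/-- A model of the Yoneda Ext-algebra `Ext^*_R(M,M)` of a module `M`, as a graded
`k`-algebra `E`: `piece n` is `Ext^n_R(M,M)`; `cls n f` is the cohomology class of a
cocycle `f : Pⁿ → M` computed from a minimal projective resolution of `M`; cocycles in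
degree `n` map onto `piece n`, a cocycle has class `0` exactly when it is a coboundary,
and the multiplication of `E` is the Yoneda product, computed by composition with
liftings. -/
structure ExtAlgebraModel (k : Type) [Field k] (R M : Type) [Ring R] [Algebra k R]
    [AddCommGroup M] [Module R M] (E : Type) [Ring E] [Algebra k E] where
  res : MinProjRes R M
  piece : ℕ → Submodule k E
  internal : DirectSum.IsInternal piece
  one_mem : (1 : E) ∈ piece 0
  mul_mem : ∀ {m n : ℕ} {x y : E}, x ∈ piece m → y ∈ piece n → x * y ∈ piece (m + n)
  cls : ∀ n : ℕ, (res.P n →ₗ[R] M) → E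
  cls_mem : ∀ n f, res.IsCocycle n f → cls n f ∈ piece n
  cls_surjective : ∀ n, ∀ x ∈ piece n, ∃ f, res.IsCocycle n f ∧ cls n f = x
  cls_eq_zero_iff : ∀ n f, res.IsCocycle n f → (cls n f = 0 ↔ res.IsCoboundary n f)
  cls_mul : ∀ {m n : ℕ} (f : res.P m →ₗ[R] M) (g : res.P n →ₗ[R] M),
      res.IsCocycle m f → res.IsCocycle n g →
      ∀ l, res.IsLifting n g l → cls (n + m) (f.comp (l m)) = cls m f * cls n g

/-- The graded algebra `E` (e.g. an Ext-algebra or the Hochschild cohomology ring) has a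
non-nilpotent homogeneous element of positive degree. -/
def ExtAlgebraModel.HasNonNilpotentOfPositiveDegree {k R M E : Type} [Field k] [Ring R]
    [Algebra k R] [AddCommGroup M] [Module R M] [Ring E] [Algebra k E]
    (EA : ExtAlgebraModel k R M E) : Prop :=
  ∃ n : ℕ, 1 ≤ n ∧ ∃ x ∈ EA.piece n, ¬ IsNilpotent x

open LinearMap (ker range)

/-! ### Covers, Fitting's lemma and syzygies -/

section General

variable {R : Type} [Ring R]

/-- Nakayama's lemma: submodules of the radical of a finitely generated module are superfluous. -/
theorem eq_top_of_radical_sup {P : Type} [AddCommGroup P] [Module R P] [Module.Finite R P]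
    {N C : Submodule R P} (hN : N ≤ moduleRadical R P) (h : N ⊔ C = ⊤) : C = ⊤ := by
  by_contra hC
  obtain ⟨X, hX, hCX⟩ := (eq_top_or_exists_le_coatom C).resolve_left hC
  have hr : moduleRadical R P ≤ X := iInf₂_le X hX
  exact hX.1 (top_le_iff.mp (h ▸ sup_le (hN.trans hr) hCX))

/-- Uniqueness of projective covers.  The maps `π` and `ρ` need not be onto `A`: the condition
`range ρ ≤ range π` makes both of them covers of the same submodule. -/
theorem bijective_of_cover {P Q A : Type} [AddCommGroup P] [Module R P] [AddCommGroup Q]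
    [Module R Q] [AddCommGroup A] [Module R A] [Module.Finite R P] [Module.Finite R Q]
    [Module.Projective R Q] (π : P →ₗ[R] A) (ρ : Q →ₗ[R] A) (l : P →ₗ[R] Q)
    (hl : ρ ∘ₗ l = π) (hr : range ρ ≤ range π) (hπ : ker π ≤ moduleRadical R P)
    (hρ : ker ρ ≤ moduleRadical R Q) : Function.Bijective l := by
  have hsurj : Function.Surjective l := by
    rw [← LinearMap.range_eq_top]
    refine eq_top_of_radical_sup hρ (top_le_iff.mp fun q _ => ?_)
    obtain ⟨p, hp⟩ := hr ⟨q, rfl⟩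
    refine Submodule.mem_sup.mpr ⟨q - l p, ?_, l p, ⟨p, rfl⟩, by simp⟩
    have : ρ (l p) = π p := LinearMap.congr_fun hl p
    simp [this, hp]
  refine ⟨?_, hsurj⟩
  obtain ⟨s, hs⟩ := Module.projective_lifting_property l LinearMap.id hsurj
  have hs' : ∀ q, l (s q) = q := LinearMap.congr_fun hs
  have hk : ker l ≤ ker π := fun p hp => by
    have : ρ (l p) = π p := LinearMap.congr_fun hl p
    simp only [LinearMap.mem_ker] at hp ⊢
    rw [← this, hp, map_zero]
  have htop : range s = ⊤ := by
    refine eq_top_of_radical_sup (hk.trans hπ) (top_le_iff.mp fun p _ => ?_)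
    exact Submodule.mem_sup.mpr ⟨p - s (l p), by simp [hs'], s (l p), ⟨_, rfl⟩, by simp⟩
  intro a b hab
  obtain ⟨a, rfl⟩ := LinearMap.range_eq_top.mp htop a
  obtain ⟨b, rfl⟩ := LinearMap.range_eq_top.mp htop b
  rw [hs', hs'] at hab
  rw [hab]

theorem IsIndecomposableModule.of_equiv {A B : Type} [AddCommGroup A] [Module R A]
    [AddCommGroup B] [Module R B] (e : A ≃ₗ[R] B) (h : IsIndecomposableModule R A) :
    IsIndecomposableModule R B := by
  obtain ⟨h1, h2⟩ := h
  refine ⟨e.symm.toEquiv.nontrivial, fun N₁ N₂ hN => ?_⟩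
  let o := Submodule.orderIsoMapComap e.symm
  have := h2 (o N₁) (o N₂) ((OrderIso.isCompl_iff o).mp hN)
  simpa using this

/-- If `π : P → A` is onto an indecomposable module, with kernel in the radical, then every
decomposition of `P` that induces a decomposition of `ker π` is trivial. -/
theorem eq_bot_of_split_cover {P A : Type} [AddCommGroup P] [Module R P] [AddCommGroup A]
    [Module R A] [Module.Finite R P] (hA : IsIndecomposableModule R A) (π : P →ₗ[R] A)
    (hs : Function.Surjective π) (hπ : ker π ≤ moduleRadical R P) {P₁ P₂ : Submodule R P}
    (hP : IsCompl P₁ P₂) (hK : ker π ≤ (ker π ⊓ P₁) ⊔ (ker π ⊓ P₂)) : P₁ = ⊥ ∨ P₂ = ⊥ := by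
  have key : ∀ {X Y : Submodule R P}, IsCompl X Y → X.map π = ⊥ → X = ⊥ := by
    intro X Y hXY h
    replace h : X ≤ ker π := LinearMap.le_ker_iff_map.mpr h
    have hY := eq_top_of_radical_sup (h.trans hπ) hXY.sup_eq_top
    simpa [hY] using hXY.inf_eq_bot
  have hc : IsCompl (P₁.map π) (P₂.map π) := by
    refine IsCompl.of_eq ?_ ?_
    · rw [Submodule.eq_bot_iff]
      rintro a ⟨⟨p, hp, rfl⟩, ⟨q, hq, hpq⟩⟩
      have hmem : p - q ∈ ker π := by simp [hpq]
      obtain ⟨u, ⟨hu, hu1⟩, v, ⟨hv, hv2⟩, huv⟩ := Submodule.mem_sup.mp (hK hmem)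
      -- `p - u = q + v` lies in both summands
      have h0 : p - u ∈ P₁ ⊓ P₂ := by
        refine ⟨P₁.sub_mem hp hu1, ?_⟩
        have : p - u = q + v := by
          have : p = u + v + q := by rw [huv]; abel
          rw [this]; abel
        rw [this]
        exact P₂.add_mem hq hv2
      rw [hP.inf_eq_bot, Submodule.mem_bot, sub_eq_zero] at h0
      rw [h0]
      exact hu
    · rw [← Submodule.map_sup, hP.sup_eq_top, Submodule.map_top, LinearMap.range_eq_top.mpr hs]
  rcases hA.2 _ _ hc with h | h
  · exact Or.inl (key hP h)
  · exact Or.inr (key hP.symm h)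

/-- Fitting's lemma with a positive exponent. -/
theorem exists_fitting {P : Type} [AddCommGroup P] [Module R P] [IsArtinian R P]
    [IsNoetherian R P] (T : Module.End R P) :
    ∃ n : ℕ, IsCompl (ker (T ^ (n + 1))) (range (T ^ (n + 1))) := by
  obtain ⟨n, hn⟩ := Filter.eventually_atTop.mp T.eventually_isCompl_ker_pow_range_pow
  exact ⟨n, hn (n + 1) (Nat.le_succ n)⟩

theorem pow_fix {P : Type} [AddCommGroup P] [Module R P] (T : Module.End R P) {x : P}
    (h : T x = x) (n : ℕ) : (T ^ n) x = x := by
  induction n with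
  | zero => rfl
  | succ n ih => rw [pow_succ, Module.End.mul_apply, h, ih]

/-- The kernel of a cover `P → A` of an indecomposable module is zero or indecomposable if `P` is
injective: the projection onto a direct summand of the kernel extends to `P`, and the Fitting
decomposition of the extension restricts to the given decomposition of the kernel. -/
theorem isIndecomposable_ker {P A : Type} [AddCommGroup P] [Module R P] [AddCommGroup A]
    [Module R A] [IsArtinian R P] [IsNoetherian R P] [Module.Injective R P]
    (hA : IsIndecomposableModule R A) (π : P →ₗ[R] A)
    (hs : Function.Surjective π) (hπ : ker π ≤ moduleRadical R P) (hne : Nontrivial (ker π)) :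
    IsIndecomposableModule R (ker π) := by
  refine ⟨hne, fun N₁ N₂ hN => ?_⟩
  -- extend the projection onto `N₁` to an endomorphism of `P`
  obtain ⟨T, hT⟩ := Module.Injective.out (ker π).subtype (Submodule.subtype_injective _)
    ((ker π).subtype ∘ₗ N₁.subtype ∘ₗ N₁.projectionOnto N₂ hN)
  have h1 : ∀ x ∈ N₁, T x = x := fun x hx => by
    have := hT x
    rw [Submodule.subtype_apply] at this
    rw [this]
    simp [Submodule.projectionOnto_apply_left hN ⟨x, hx⟩]
  have h2 : ∀ x ∈ N₂, T x = 0 := fun x hx => by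
    have := hT x
    rw [Submodule.subtype_apply] at this
    rw [this]
    simp [(Submodule.projectionOnto_apply_eq_zero_iff hN).mpr hx]
  obtain ⟨n, hn⟩ := exists_fitting T
  have h1' : ∀ x ∈ N₁, (x : P) ∈ range (T ^ (n + 1)) :=
    fun x hx => ⟨x, pow_fix T (h1 x hx) _⟩
  have h2' : ∀ x ∈ N₂, (x : P) ∈ ker (T ^ (n + 1)) := fun x hx => by
    rw [LinearMap.mem_ker, pow_succ, Module.End.mul_apply, h2 x hx, map_zero]
  have := eq_bot_of_split_cover hA π hs hπ hn (fun x hx => by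
    have : (⟨x, hx⟩ : ker π) ∈ N₁ ⊔ N₂ := hN.sup_eq_top ▸ Submodule.mem_top
    obtain ⟨a, ha, b, hb, hab⟩ := Submodule.mem_sup.mp this
    have hab' : (b : P) + a = x := by rw [add_comm]; exact congrArg Subtype.val hab
    rw [← hab']
    exact Submodule.add_mem_sup ⟨b.2, h2' b hb⟩ ⟨a.2, h1' a ha⟩)
  rcases this with h | h
  · right
    rw [Submodule.eq_bot_iff]
    intro x hx
    have := h2' x hx
    rw [h, Submodule.mem_bot] at this
    exact Subtype.ext this
  · left
    rw [Submodule.eq_bot_iff]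
    intro x hx
    have := h1' x hx
    rw [h, Submodule.mem_bot] at this
    exact Subtype.ext this

/-- An endomorphism of the cover of an indecomposable module that fixes the nonzero kernel pointwise
is injective, by Fitting's lemma. -/
theorem injective_of_fix {P A : Type} [AddCommGroup P] [Module R P] [AddCommGroup A]
    [Module R A] [IsArtinian R P] [IsNoetherian R P]
    (hA : IsIndecomposableModule R A) (π : P →ₗ[R] A)
    (hs : Function.Surjective π) (hπ : ker π ≤ moduleRadical R P) (hne : ker π ≠ ⊥)
    (T : Module.End R P) (hT : ∀ x ∈ ker π, T x = x) : Function.Injective T := by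
  obtain ⟨n, hn⟩ := exists_fitting T
  have hle : ker π ≤ range (T ^ (n + 1)) := fun x hx => ⟨x, pow_fix T (hT x hx) _⟩
  rcases eq_bot_of_split_cover hA π hs hπ hn
    (le_sup_of_le_right (le_inf le_rfl hle)) with h | h
  · rw [← LinearMap.ker_eq_bot, eq_bot_iff, ← h]
    intro x hx
    rw [LinearMap.mem_ker] at hx ⊢
    rw [pow_succ, Module.End.mul_apply, hx, map_zero]
  · exact absurd (le_bot_iff.mp (h ▸ hle)) hne

/-- Indecomposable modules with isomorphic nonzero first syzygies are isomorphic, provided that their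
covers `P` and `Q` are injective: the isomorphism of the syzygies extends to maps `P → Q` and
`Q → P`, which are bijective by `injective_of_fix`. -/
theorem equiv_of_ker_equiv {P A Q B : Type} [AddCommGroup P] [Module R P] [AddCommGroup A]
    [Module R A] [AddCommGroup Q] [Module R Q] [AddCommGroup B] [Module R B]
    [IsArtinian R P] [IsNoetherian R P] [Module.Injective R P]
    [IsArtinian R Q] [IsNoetherian R Q] [Module.Injective R Q]
    (hA : IsIndecomposableModule R A) (hB : IsIndecomposableModule R B)
    (π : P →ₗ[R] A) (hπs : Function.Surjective π) (hπ : ker π ≤ moduleRadical R P)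
    (ρ : Q →ₗ[R] B) (hρs : Function.Surjective ρ) (hρ : ker ρ ≤ moduleRadical R Q)
    (hne : ker π ≠ ⊥) (φ : ker π ≃ₗ[R] ker ρ) : Nonempty (A ≃ₗ[R] B) := by
  obtain ⟨F, hF⟩ := Module.Injective.out (ker π).subtype (Submodule.subtype_injective _)
    ((ker ρ).subtype ∘ₗ φ.toLinearMap)
  obtain ⟨G, hG⟩ := Module.Injective.out (ker ρ).subtype (Submodule.subtype_injective _)
    ((ker π).subtype ∘ₗ φ.symm.toLinearMap)
  have hF' : ∀ x : ker π, F x = φ x := hF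
  have hG' : ∀ x : ker ρ, G x = φ.symm x := hG
  have hne' : ker ρ ≠ ⊥ := by
    intro h
    have : Subsingleton (ker ρ) := by rw [h]; infer_instance
    have : Subsingleton (ker π) := φ.toEquiv.subsingleton
    exact hne (Submodule.subsingleton_iff_eq_bot.mp this)
  have hGF : Function.Injective (G ∘ₗ F) := injective_of_fix hA π hπs hπ hne (G ∘ₗ F)
    fun x hx => by simp [hF' ⟨x, hx⟩, hG']
  have hFG : Function.Injective (F ∘ₗ G) := injective_of_fix hB ρ hρs hρ hne' (F ∘ₗ G)
    fun x hx => by simp [hG' ⟨x, hx⟩, hF']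
  have hFGs := IsArtinian.surjective_of_injective_endomorphism _ hFG
  have hFb : Function.Bijective F := by
    rw [LinearMap.coe_comp] at hGF hFGs
    exact ⟨hGF.of_comp, hFGs.of_comp⟩
  have hmap : (ker π).map (LinearEquiv.ofBijective F hFb : P →ₗ[R] Q) = ker ρ := by
    ext y
    constructor
    · rintro ⟨x, hx, rfl⟩
      have := hF' ⟨x, hx⟩
      simp only [LinearEquiv.coe_coe, LinearEquiv.ofBijective_apply]
      rw [show F x = φ ⟨x, hx⟩ from this]
      exact (φ ⟨x, hx⟩).2
    · intro hy
      refine ⟨φ.symm ⟨y, hy⟩, (φ.symm ⟨y, hy⟩).2, ?_⟩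
      simp [hF']
  exact ⟨(π.quotKerEquivOfSurjective hπs).symm ≪≫ₗ
    Submodule.Quotient.equiv _ _ (LinearEquiv.ofBijective F hFb) hmap ≪≫ₗ
    ρ.quotKerEquivOfSurjective hρs⟩

/-- Over a selfinjective ring, finitely generated projective modules are injective. -/
theorem injective_of_projective [Module.Injective R R] (P : Type) [AddCommGroup P] [Module R P]
    [Module.Finite R P] [Module.Projective R P] : Module.Injective R P := by
  obtain ⟨n, p, hp⟩ := Module.Finite.exists_fin' R P
  obtain ⟨s, hs⟩ := Module.projective_lifting_property p LinearMap.id hp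
  refine ⟨fun X Y _ _ _ _ i hi g => ?_⟩
  obtain ⟨h, hh⟩ := Module.Injective.out i hi (s ∘ₗ g)
  exact ⟨p ∘ₗ h, fun x => by simpa [hh] using LinearMap.congr_fun hs (g x)⟩

/-- The reason is that a finitely generated indecomposable projective module is a quotient of `R`. -/
theorem length_le_of_indecomposable_projective [IsArtinianRing R] {P : Type} [AddCommGroup P]
    [Module R P] [Module.Finite R P] [Module.Projective R P] (hP : IsIndecomposableModule R P) :
    Module.length R P ≤ Module.length R R := by
  have := hP.1
  obtain ⟨N, hN⟩ := IsCoatomic.exists_coatom (α := Submodule R P)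
  obtain ⟨p, -, hp⟩ := SetLike.exists_of_lt hN.lt_top
  have : IsSimpleModule R (P ⧸ N) := isSimpleModule_iff_isCoatom.mpr hN
  let β : R →ₗ[R] P := LinearMap.toSpanSingleton R P p
  have hβ : Function.Surjective (N.mkQ ∘ₗ β) := by
    have hne : N.mkQ p ≠ 0 := by simpa using hp
    convert IsSimpleModule.toSpanSingleton_surjective R hne using 1
    ext; simp [β]
  obtain ⟨α, hα⟩ := Module.projective_lifting_property (N.mkQ ∘ₗ β) N.mkQ hβ
  let T : Module.End R P := β ∘ₗ α
  have hT : ∀ x, N.mkQ (T x) = N.mkQ x := LinearMap.congr_fun hα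
  have hTn : ∀ n x, N.mkQ ((T ^ n) x) = N.mkQ x := by
    intro n
    induction n with
    | zero => intro x; rfl
    | succ n ih => intro x; rw [pow_succ, Module.End.mul_apply, ih, hT]
  obtain ⟨n, hn⟩ := exists_fitting T
  refine Module.length_le_of_surjective β ?_
  rcases hP.2 _ _ hn with h | h
  · have hs := IsArtinian.surjective_of_injective_endomorphism _ (LinearMap.ker_eq_bot.mp h)
    intro x
    obtain ⟨y, rfl⟩ := hs x
    exact ⟨α ((T ^ n) y), by rw [pow_succ']; rfl⟩
  · exfalso
    have h0 : (T ^ (n + 1)) p = 0 := by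
      rw [← Submodule.mem_bot R, ← h]
      exact ⟨p, rfl⟩
    have := hTn (n + 1) p
    rw [h0, map_zero] at this
    exact hp (by simpa using this.symm)

end General

/-! ### Lengths and decompositions into indecomposables -/

section Decompositions

variable {R : Type} [Ring R]

theorem length_eq_sum_of_isInternal {V : Type} [AddCommGroup V] [Module R V] {b : ℕ}
    {N : Fin b → Submodule R V} (hN : DirectSum.IsInternal N) :
    Module.length R V = ∑ i, Module.length R (N i) := by
  rw [← Module.length_pi_of_fintype]
  exact ((LinearEquiv.ofBijective (DirectSum.coeLinearMap N) hN).symm ≪≫ₗ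
    DirectSum.linearEquivFunOnFintype R (Fin b) (fun i => N i)).length_eq

/-- Existence part of the Krull–Schmidt theorem, relative to a submodule `W`. -/
theorem exists_finset_indecomposable {V : Type} [AddCommGroup V] [Module R V] [IsArtinian R V]
    (W : Submodule R V) : ∃ s : Finset (Submodule R V), s.SupIndep id ∧ s.sup id = W ∧
      ∀ N ∈ s, IsIndecomposableModule R N := by
  classical
  induction W using WellFoundedLT.induction with
  | ind W ih =>
  rcases eq_or_ne W ⊥ with rfl | hW
  · exact ⟨∅, Finset.supIndep_empty _, by simp, by simp⟩
  by_cases hI : IsIndecomposableModule R W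
  · exact ⟨{W}, Finset.supIndep_singleton _ _, by simp, by simpa using hI⟩
  have hnt : Nontrivial W := Submodule.nontrivial_iff_ne_bot.mpr hW
  unfold IsIndecomposableModule at hI
  push Not at hI
  obtain ⟨N₁, N₂, hN, h1, h2⟩ := hI hnt
  have lt : ∀ {X Y : Submodule R W}, IsCompl X Y → Y ≠ ⊥ → X.map W.subtype < W := by
    intro X Y hXY hY
    refine lt_of_le_of_ne (Submodule.map_subtype_le _ _) fun h => hY ?_
    have : X = ⊤ := Submodule.map_injective_of_injective W.subtype_injective (by simpa using h)
    simpa [this] using hXY.inf_eq_bot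
  obtain ⟨s₁, i₁, e₁, m₁⟩ := ih _ (lt hN h2)
  obtain ⟨s₂, i₂, e₂, m₂⟩ := ih _ (lt hN.symm h1)
  refine ⟨s₁ ∪ s₂, ?_, ?_, ?_⟩
  · refine i₁.union i₂ ?_
    rw [e₁, e₂, disjoint_iff, ← Submodule.map_inf _ W.subtype_injective, hN.inf_eq_bot,
      Submodule.map_bot]
  · rw [Finset.sup_union, e₁, e₂, ← Submodule.map_sup, hN.sup_eq_top]
    simp
  · intro N h
    rcases Finset.mem_union.mp h with h | h
    · exact m₁ N h
    · exact m₂ N h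

theorem exists_internal_indecomposable (V : Type) [AddCommGroup V] [Module R V]
    [IsArtinian R V] : ∃ (b : ℕ) (N : Fin b → Submodule R V), (b : ℕ∞) ≤ Module.length R V ∧
      DirectSum.IsInternal N ∧ ∀ i, IsIndecomposableModule R (N i) := by
  classical
  obtain ⟨s, hs, htop, hm⟩ := exists_finset_indecomposable (⊤ : Submodule R V)
  let N : Fin s.card → Submodule R V := fun i => (s.equivFin.symm i).1
  have hi : DirectSum.IsInternal N := by
    refine DirectSum.isInternal_submodule_of_iSupIndep_of_iSup_eq_top ?_ ?_
    · exact (iSupIndep_comp_coe_iff_supIndep.mpr hs).comp s.equivFin.symm.injective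
    · rw [← htop, Finset.sup_eq_iSup, iSup_subtype']
      exact s.equivFin.symm.iSup_comp (g := fun x : s => x.1)
  have hI : ∀ i, IsIndecomposableModule R (N i) := fun i => hm _ (s.equivFin.symm i).2
  refine ⟨s.card, N, ?_, hi, hI⟩
  rw [length_eq_sum_of_isInternal hi]
  calc ((s.card : ℕ) : ℕ∞) = ∑ i : Fin s.card, 1 := by simp
    _ ≤ _ := Finset.sum_le_sum fun i _ => by
      have := (hI i).1
      exact Order.one_le_iff_pos.mpr Module.length_pos

end Decompositions

/-! ### Towers of indecomposable modules -/

section Tower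

variable {R : Type} [Ring R] {X : ℕ → Type} [∀ j, AddCommGroup (X j)] [∀ j, Module R (X j)]
  (g : ∀ j, X (j + 1) →ₗ[R] X j)

/-- The image of `X (j + i)` in `X j` under the composite of the transition maps `g`.  The
recursion peels off the map into `X j`, so that no transport along `j + i = …` is needed. -/
def towerImage : ℕ → ∀ j, Submodule R (X j)
  | 0, _ => ⊤
  | i + 1, j => (towerImage i (j + 1)).map (g j)

/-- The composite `X (J + i) → X J` of transition maps. -/
def towerMap (J : ℕ) : ∀ i, X (J + i) →ₗ[R] X J
  | 0 => LinearMap.id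
  | i + 1 => towerMap J i ∘ₗ g (J + i)

theorem map_towerImage {Z : Type} [AddCommGroup Z] [Module R Z] (G : ∀ j, X j →ₗ[R] Z)
    (hG : ∀ j, G (j + 1) = G j ∘ₗ g j) (i j : ℕ) :
    (towerImage g i j).map (G j) = range (G (j + i)) := by
  induction i generalizing j with
  | zero => simp [towerImage]
  | succ i ih =>
    rw [towerImage, ← Submodule.map_comp, ← hG, ih, Nat.succ_add_eq_add_succ]

theorem map_towerMap_towerImage (J i a : ℕ) :
    (towerImage g i (J + a)).map (towerMap g J a) = range (towerMap g J (a + i)) := by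
  induction i generalizing a with
  | zero => simp [towerImage]
  | succ i ih =>
    have := ih (a + 1)
    rw [Nat.succ_add_eq_add_succ] at this
    rw [towerImage, ← Submodule.map_comp, ← this]
    rfl

theorem towerImage_eq_range (J i : ℕ) : towerImage g i J = range (towerMap g J i) := by
  have := map_towerMap_towerImage g J i 0
  rw [Nat.zero_add] at this
  rw [← this]
  exact (Submodule.map_id _).symm

theorem towerImage_antitone (j : ℕ) : Antitone fun i => towerImage g i j := by
  refine antitone_nat_of_succ_le fun i => ?_
  induction i generalizing j with
  | zero => exact le_top
  | succ i ih => exact Submodule.map_mono (ih (j + 1))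

theorem injective_of_surjective_of_length_le {A B : Type} [AddCommGroup A] [Module R A]
    [AddCommGroup B] [Module R B] (f : A →ₗ[R] B) (hf : Function.Surjective f)
    (h : Module.length R A ≤ Module.length R B) (hB : Module.length R B ≠ ⊤) :
    Function.Injective f := by
  have e := Module.length_eq_add_of_exact (ker f).subtype f (Submodule.subtype_injective _) hf
    (LinearMap.exact_subtype_ker_map f)
  rw [e] at h
  have h0 : Module.length R (ker f) = 0 := by
    generalize Module.length R (ker f) = a at *
    generalize Module.length R B = b at *
    have ha : a ≠ ⊤ := by rintro rfl; simp at h; exact hB h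
    lift a to ℕ using ha
    lift b to ℕ using hB
    norm_cast at *
    omega
  rw [Module.length_eq_zero_iff, Submodule.subsingleton_iff_eq_bot] at h0
  exact LinearMap.ker_eq_bot.mp h0

/-- A Harada–Sai type statement: in a tower of indecomposable modules of bounded length in which
no composite into `X 0` vanishes, some transition map is an isomorphism.

The stable images `Y j = ⋂ᵢ im (X (j + i) → X j)` map onto each other, so their lengths increase
and become constant from some `J` on.  For large `a` the image of `X (J + a)` in `X J` is `Y J`,
onto which `Y (J + a)` maps isomorphically; hence `X (J + a)` is the direct sum of `Y (J + a) ≠ 0`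
and the kernel of `X (J + a) → X J`, so that this kernel is zero. -/
theorem exists_bijective_of_tower [∀ j, IsArtinian R (X j)]
    (hX : ∀ j, IsIndecomposableModule R (X j)) (C : ℕ) (hC : ∀ j, Module.length R (X j) ≤ C)
    {Z : Type} [AddCommGroup Z] [Module R Z] (G : ∀ j, X j →ₗ[R] Z)
    (hG : ∀ j, G (j + 1) = G j ∘ₗ g j) (hG0 : ∀ j, G j ≠ 0) :
    ∃ j, Function.Bijective (g j) := by
  have hst : ∀ j, ∃ N, ∀ i, N ≤ i → towerImage g i j = towerImage g N j := fun j => by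
    obtain ⟨N, hN⟩ := IsArtinian.monotone_stabilizes
      (⟨fun i => OrderDual.toDual (towerImage g i j), (towerImage_antitone g j).dual_right⟩ :
        ℕ →o (Submodule R (X j))ᵒᵈ)
    exact ⟨N, fun i hi => (hN i hi).symm⟩
  choose N hN using hst
  let Y : ∀ j, Submodule R (X j) := fun j => towerImage g (N j) j
  have hY : ∀ j i, N j ≤ i → towerImage g i j = Y j := hN
  have hgY : ∀ j, (Y (j + 1)).map (g j) = Y j := fun j => by
    rw [← hY (j + 1) (max (N (j + 1)) (N j)) (le_max_left _ _),
      ← hY j (max (N (j + 1)) (N j) + 1) (by omega)]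
    rfl
  have hY0 : ∀ j, Y j ≠ ⊥ := by
    intro j
    induction j with
    | zero =>
      intro h
      have := map_towerImage g G hG (N 0) 0
      rw [show towerImage g (N 0) 0 = ⊥ from h, Submodule.map_bot] at this
      exact hG0 _ (LinearMap.range_eq_bot.mp this.symm)
    | succ j ih =>
      intro h
      apply ih
      rw [← hgY, h, Submodule.map_bot]
  have htY : ∀ J a, (Y (J + a)).map (towerMap g J a) = Y J := by
    intro J a
    induction a with
    | zero => exact Submodule.map_id _
    | succ a ih =>
      rw [towerMap, Submodule.map_comp]
      exact (congrArg _ (hgY (J + a))).trans ih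
  have hlen : ∀ j, Module.length R (Y j) ≤ C := fun j =>
    (Module.length_le_of_injective (Y j).subtype (Submodule.subtype_injective _)).trans (hC j)
  have hfin : ∀ j, Module.length R (Y j) ≠ ⊤ := fun j => ne_top_of_le_ne_top (by simp) (hlen j)
  -- an index where the length of the stable image is maximal
  obtain ⟨J, hJ⟩ : ∃ J, ∀ j, Module.length R (Y j) ≤ Module.length R (Y J) := by
    let m : ℕ → ℕ := fun j => C - (Module.length R (Y j)).toNat
    refine ⟨Function.argmin m, fun j => ?_⟩
    have h1 : m (Function.argmin m) ≤ m j := Function.argmin_le m j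
    have h2 : ∀ j, (Module.length R (Y j)).toNat ≤ C := fun j => by
      have := ENat.toNat_le_toNat (hlen j) (by simp)
      simpa using this
    rw [← ENat.natCast_toNat (hfin j), ← ENat.natCast_toNat (hfin (Function.argmin m))]
    have h3 := h2 j
    have h4 := h2 (Function.argmin m)
    simp only [m] at h1 h4 ⊢
    norm_cast
    omega
  have hmaps : ∀ a, ∀ x ∈ Y (J + a), towerMap g J a x ∈ Y J := fun a x hx =>
    htY J a ▸ Submodule.mem_map_of_mem hx
  have hinjY : ∀ a, ∀ x ∈ Y (J + a), towerMap g J a x = 0 → x = 0 := by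
    intro a x hx h0
    have hs : Function.Surjective ((towerMap g J a).restrict (hmaps a)) := by
      rintro ⟨y, hy⟩
      have hy' := hy
      rw [← htY J a] at hy'
      obtain ⟨x, hx, rfl⟩ := hy'
      exact ⟨⟨x, hx⟩, rfl⟩
    have hi := injective_of_surjective_of_length_le _ hs (hJ _) (hfin _)
    have : (⟨x, hx⟩ : Y (J + a)) = 0 := hi (by
      rw [map_zero]
      exact Subtype.ext h0)
    exact congrArg Subtype.val this
  have hrange : ∀ a, N J ≤ a → range (towerMap g J a) = Y J := fun a ha => by
    rw [← towerImage_eq_range, hY J a ha]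
  have hinj : ∀ a, N J ≤ a → Function.Injective (towerMap g J a) := by
    intro a ha
    have hc : IsCompl (Y (J + a)) (ker (towerMap g J a)) := by
      refine IsCompl.of_eq ?_ (top_le_iff.mp fun x _ => ?_)
      · rw [Submodule.eq_bot_iff]
        exact fun x hx => hinjY a x hx.1 hx.2
      · have hx : towerMap g J a x ∈ Y J := hrange a ha ▸ ⟨x, rfl⟩
        rw [← htY J a] at hx
        obtain ⟨y, hy, hxy⟩ := hx
        exact Submodule.mem_sup.mpr ⟨y, hy, x - y, by simp [hxy], by simp⟩
    exact LinearMap.ker_eq_bot.mp (((hX _).2 _ _ hc).resolve_left (hY0 _))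
  refine ⟨J + N J, ?_, fun x => ?_⟩
  · have := hinj (N J + 1) (by omega)
    rw [towerMap, LinearMap.coe_comp] at this
    exact this.of_comp
  · have hx : towerMap g J (N J) x ∈ range (towerMap g J (N J + 1)) := by
      rw [hrange _ (by omega), ← hrange (N J) le_rfl]
      exact ⟨x, rfl⟩
    obtain ⟨y, hy⟩ := hx
    exact ⟨y, hinj (N J) le_rfl hy⟩

end Tower

/-! ### Minimal resolutions -/

section Resolutions

variable {R M : Type} [Ring R] [AddCommGroup M] [Module R M]

namespace MinProjRes

instance instFiniteP (res : MinProjRes R M) (i : ℕ) : Module.Finite R (res.P i) := res.finite i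

instance instProjectiveP (res : MinProjRes R M) (i : ℕ) : Module.Projective R (res.P i) :=
  res.projective i

variable (res : MinProjRes R M)

theorem range_d_le_radical (i : ℕ) : range (res.d i) ≤ moduleRadical R (res.P i) := by
  cases i with
  | zero => rw [← res.exact_zero]; exact res.minimal_zero
  | succ i => rw [← res.exact_succ]; exact res.minimal_succ i

theorem d_comp_d (i : ℕ) : res.d i ∘ₗ res.d (i + 1) = 0 :=
  LinearMap.range_le_ker_iff.mp (res.exact_succ i).ge

theorem augment_comp_d : res.augment ∘ₗ res.d 0 = 0 :=
  LinearMap.range_le_ker_iff.mp res.exact_zero.ge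

/-- The `i`-th syzygy `Ωⁱ M`, as the cokernel of `d : P^{i+1} → P^i`.  This description is uniform
in `i`: it gives `M` for `i = 0` and the image of `P^{j+1} → P^j` for `i = j + 1`. -/
abbrev Syz (i : ℕ) : Type := res.P i ⧸ range (res.d i)

/-- `Ω⁰ M ≃ M`. -/
noncomputable def syzZero : res.Syz 0 ≃ₗ[R] M :=
  Submodule.quotEquivOfEq _ _ res.exact_zero.symm ≪≫ₗ
    res.augment.quotKerEquivOfSurjective res.augment_surjective

/-- `Ω^{i+1} M` is the image of `d : P^{i+1} → P^i`. -/
noncomputable def syzSucc (i : ℕ) : res.Syz (i + 1) ≃ₗ[R] range (res.d i) :=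
  Submodule.quotEquivOfEq _ _ (res.exact_succ i).symm ≪≫ₗ (res.d i).quotKerEquivRange

/-- `Ω^{i+1} M` is the kernel of the projective cover `P^i → Ω^i M`. -/
noncomputable def syzSuccKer (i : ℕ) :
    ker (range (res.d i)).mkQ ≃ₗ[R] res.Syz (i + 1) :=
  LinearEquiv.ofEq _ _ (Submodule.ker_mkQ _) ≪≫ₗ (res.syzSucc i).symm

theorem ker_mkQ_le_radical (i : ℕ) :
    ker (range (res.d i)).mkQ ≤ moduleRadical R (res.P i) := by
  rw [Submodule.ker_mkQ]; exact res.range_d_le_radical i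

theorem subsingleton_syz_succ {i : ℕ} (h : Subsingleton (res.Syz i)) :
    Subsingleton (res.Syz (i + 1)) := by
  have h1 : range (res.d i) = ⊤ := Submodule.Quotient.subsingleton_iff.mp h
  have h2 : (⊥ : Submodule R (res.P i)) = ⊤ :=
    eq_top_of_radical_sup (res.range_d_le_radical i) (by rw [h1, sup_bot_eq])
  have : Subsingleton (res.P i) := (Submodule.subsingleton_iff R).mp (subsingleton_of_bot_eq_top h2)
  exact (res.syzSucc i).toEquiv.subsingleton

theorem nontrivial_syz {i j : ℕ} (hij : i ≤ j) (h : Nontrivial (res.Syz j)) :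
    Nontrivial (res.Syz i) := by
  by_contra hi
  rw [not_nontrivial_iff_subsingleton] at hi
  have : Subsingleton (res.Syz j) := by
    induction j, hij using Nat.le_induction with
    | base => exact hi
    | succ j _ ih =>
      by_cases hj : Nontrivial (res.Syz j)
      · exact res.subsingleton_syz_succ (ih hj)
      · exact res.subsingleton_syz_succ (not_nontrivial_iff_subsingleton.mp hj)
  exact not_subsingleton _ this

theorem indecomposable_syz [IsArtinianRing R] [Module.Injective R R]
    (hM : IsIndecomposableModule R M) (hnt : ∀ i, Nontrivial (res.Syz i)) (i : ℕ) :
    IsIndecomposableModule R (res.Syz i) := by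
  induction i with
  | zero => exact hM.of_equiv res.syzZero.symm
  | succ i ih =>
    have := injective_of_projective (R := R) (res.P i)
    have := hnt (i + 1)
    exact (isIndecomposable_ker ih (range (res.d i)).mkQ (Submodule.mkQ_surjective _)
      (res.ker_mkQ_le_radical i) (res.syzSuccKer i).toEquiv.nontrivial).of_equiv (res.syzSuccKer i)

/-- `Ω` reflects isomorphism between the syzygies of `M`. -/
theorem syz_descend [IsArtinianRing R] [Module.Injective R R]
    (hM : IsIndecomposableModule R M) (hnt : ∀ i, Nontrivial (res.Syz i)) {a b : ℕ}
    (e : res.Syz (a + 1) ≃ₗ[R] res.Syz (b + 1)) : Nonempty (res.Syz a ≃ₗ[R] res.Syz b) := by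
  have := injective_of_projective (R := R) (res.P a)
  have := injective_of_projective (R := R) (res.P b)
  have := hnt (a + 1)
  refine equiv_of_ker_equiv (res.indecomposable_syz hM hnt a) (res.indecomposable_syz hM hnt b)
    _ (Submodule.mkQ_surjective _) (res.ker_mkQ_le_radical a)
    _ (Submodule.mkQ_surjective _) (res.ker_mkQ_le_radical b) ?_
    (res.syzSuccKer a ≪≫ₗ e ≪≫ₗ (res.syzSuccKer b).symm)
  exact Submodule.nontrivial_iff_ne_bot.mp (res.syzSuccKer a).toEquiv.nontrivial

theorem syz_descend_iterate [IsArtinianRing R] [Module.Injective R R]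
    (hM : IsIndecomposableModule R M) (hnt : ∀ i, Nontrivial (res.Syz i)) (a i : ℕ)
    (e : res.Syz (a + i) ≃ₗ[R] res.Syz i) : Nonempty (res.Syz a ≃ₗ[R] res.Syz 0) := by
  induction i with
  | zero => exact ⟨e⟩
  | succ i ih =>
    obtain ⟨e'⟩ := res.syz_descend hM hnt (a := a + i) (b := i) e
    exact ih e'

/-- Comparison theorem: a map from a complex of projectives to a resolution. -/
theorem exists_lift {Q : ℕ → Type} [∀ i, AddCommGroup (Q i)] [∀ i, Module R (Q i)]
    [∀ i, Module.Projective R (Q i)] (δ : ∀ i, Q (i + 1) →ₗ[R] Q i)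
    (hδ : ∀ i, δ i ∘ₗ δ (i + 1) = 0) (f : Q 0 →ₗ[R] M) (hf : f ∘ₗ δ 0 = 0) :
    ∃ l : ∀ i, Q i →ₗ[R] res.P i, res.augment ∘ₗ l 0 = f ∧
      ∀ i, res.d i ∘ₗ l (i + 1) = l i ∘ₗ δ i := by
  have step : ∀ i (l : Q i →ₗ[R] res.P i), range (l ∘ₗ δ i) ≤ range (res.d i) →
      ∃ l' : Q (i + 1) →ₗ[R] res.P (i + 1), res.d i ∘ₗ l' = l ∘ₗ δ i ∧
        range (l' ∘ₗ δ (i + 1)) ≤ range (res.d (i + 1)) := by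
    intro i l h
    obtain ⟨l', hl'⟩ := Module.projective_lifting_property (res.d i).rangeRestrict
      ((l ∘ₗ δ i).codRestrict (range (res.d i)) fun x => h ⟨x, rfl⟩)
      (res.d i).surjective_rangeRestrict
    have hl : res.d i ∘ₗ l' = l ∘ₗ δ i := by
      ext x
      exact congrArg Subtype.val (LinearMap.congr_fun hl' x)
    refine ⟨l', hl, ?_⟩
    rw [← res.exact_succ, LinearMap.range_le_ker_iff, ← LinearMap.comp_assoc, hl,
      LinearMap.comp_assoc, hδ, LinearMap.comp_zero]
  obtain ⟨l₀, hl₀⟩ := Module.projective_lifting_property res.augment f res.augment_surjective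
  have h₀ : range (l₀ ∘ₗ δ 0) ≤ range (res.d 0) := by
    rw [← res.exact_zero, LinearMap.range_le_ker_iff, ← LinearMap.comp_assoc, hl₀, hf]
  choose next hnext hnext' using step
  let L : ∀ i, { l : Q i →ₗ[R] res.P i // range (l ∘ₗ δ i) ≤ range (res.d i) } := fun i =>
    Nat.rec ⟨l₀, h₀⟩ (fun i l => ⟨next i l.1 l.2, hnext' i l.1 l.2⟩) i
  exact ⟨fun i => (L i).1, hl₀, fun i => hnext i (L i).1 (L i).2⟩

/-- Uniqueness of minimal resolutions: a chain map between minimal resolutions covering an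
isomorphism is an isomorphism in each degree.  Here `Q` is a minimal resolution of the image `M`
of `f`. -/
theorem bijective_lift {Q : ℕ → Type} [∀ i, AddCommGroup (Q i)] [∀ i, Module R (Q i)]
    [∀ i, Module.Finite R (Q i)] (δ : ∀ i, Q (i + 1) →ₗ[R] Q i)
    (hδ : ∀ i, ker (δ i) = range (δ (i + 1))) (hrad : ∀ i, range (δ i) ≤ moduleRadical R (Q i))
    (f : Q 0 →ₗ[R] M) (hf : ker f = range (δ 0)) (hfs : Function.Surjective f)
    (l : ∀ i, Q i →ₗ[R] res.P i) (h0 : res.augment ∘ₗ l 0 = f)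
    (hl : ∀ i, res.d i ∘ₗ l (i + 1) = l i ∘ₗ δ i) (i : ℕ) : Function.Bijective (l i) := by
  suffices Function.Bijective (l i) ∧ range (res.d i) ≤ range (l i ∘ₗ δ i) from this.1
  induction i with
  | zero =>
    have hb : Function.Bijective (l 0) :=
      bijective_of_cover f res.augment (l 0) h0 (by rw [LinearMap.range_eq_top.mpr hfs]; exact le_top)
        (hf ▸ hrad 0) res.minimal_zero
    refine ⟨hb, fun y hy => ?_⟩
    obtain ⟨x, rfl⟩ := hb.2 y
    rw [← res.exact_zero] at hy
    have hx : x ∈ ker f := by rw [← h0]; exact hy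
    rw [hf] at hx
    obtain ⟨z, rfl⟩ := hx
    exact ⟨z, rfl⟩
  | succ i ih =>
    obtain ⟨hbi, hri⟩ := ih
    have hker : ker (l i ∘ₗ δ i) = range (δ (i + 1)) := by
      rw [LinearMap.ker_comp_of_ker_eq_bot _ (LinearMap.ker_eq_bot.mpr hbi.1), hδ]
    have hb : Function.Bijective (l (i + 1)) :=
      bijective_of_cover (l i ∘ₗ δ i) (res.d i) (l (i + 1)) (hl i) hri
        (hker ▸ hrad (i + 1)) (res.minimal_succ i)
    refine ⟨hb, fun y hy => ?_⟩
    obtain ⟨x, rfl⟩ := hb.2 y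
    rw [← res.exact_succ] at hy
    have hx : x ∈ ker (l i ∘ₗ δ i) := by rw [← hl]; exact hy
    rw [hker] at hx
    obtain ⟨z, rfl⟩ := hx
    exact ⟨z, rfl⟩

/-- Two minimal resolutions of the same module are isomorphic. -/
theorem exists_compare (res' : MinProjRes R M) :
    ∃ l : ∀ i, res'.P i ≃ₗ[R] res.P i, ∀ i x, res.d i (l (i + 1) x) = l i (res'.d i x) := by
  obtain ⟨l, h0, hl⟩ := res.exists_lift res'.d res'.d_comp_d res'.augment res'.augment_comp_d
  have hb := res.bijective_lift res'.d res'.exact_succ res'.range_d_le_radical res'.augment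
    res'.exact_zero res'.augment_surjective l h0 hl
  exact ⟨fun i => LinearEquiv.ofBijective (l i) (hb i), fun i => LinearMap.congr_fun (hl i)⟩

theorem isCoboundary_zero (n : ℕ) : res.IsCoboundary n 0 := by
  cases n with
  | zero => rfl
  | succ n => exact ⟨0, by simp⟩

/-- A coboundary of positive degree takes values in the radical of `M`, so it cannot be onto. -/
theorem not_isCoboundary_of_surjective [Nontrivial M] {n : ℕ} (hn : 1 ≤ n)
    (f : res.P n →ₗ[R] M) (hf : Function.Surjective f) : ¬ res.IsCoboundary n f := by
  obtain ⟨n, rfl⟩ : ∃ m, n = m + 1 := ⟨n - 1, by omega⟩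
  rintro ⟨h, rfl⟩
  have htop : ker h = ⊤ := by
    refine eq_top_of_radical_sup (res.range_d_le_radical n) (top_le_iff.mp fun x _ => ?_)
    obtain ⟨y, hy⟩ := hf (h x)
    exact Submodule.mem_sup.mpr ⟨res.d n y, ⟨y, rfl⟩, x - res.d n y,
      by simpa [sub_eq_zero] using hy.symm, by simp⟩
  obtain ⟨m, hm⟩ := exists_ne (0 : M)
  obtain ⟨y, hy⟩ := hf m
  rw [LinearMap.ker_eq_top.mp htop] at hy
  exact hm hy.symm

end MinProjRes

/-- Periodicity does not depend on the chosen minimal resolution. -/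
theorem IsPeriodicModule.exists_equiv (h : IsPeriodicModule R M) (res : MinProjRes R M) :
    ∃ m, Nonempty (range (res.d m) ≃ₗ[R] M) := by
  obtain ⟨res', m, ⟨e⟩⟩ := h
  obtain ⟨l, hl⟩ := res.exists_compare res'
  have hmap : (range (res'.d m)).map ((l m : res'.P m ≃ₗ[R] res.P m) : res'.P m →ₗ[R] res.P m) =
      range (res.d m) := by
    ext y
    constructor
    · rintro ⟨_, ⟨x, rfl⟩, rfl⟩
      exact ⟨l (m + 1) x, hl m x⟩
    · rintro ⟨x, rfl⟩
      refine ⟨_, ⟨(l (m + 1)).symm x, rfl⟩, ?_⟩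
      rw [LinearEquiv.coe_coe, ← hl, LinearEquiv.apply_symm_apply]
  exact ⟨m, ⟨(LinearEquiv.ofEq _ _ hmap.symm) ≪≫ₗ ((l m).submoduleMap _).symm ≪≫ₗ e⟩⟩

theorem length_le_of_hasBettiNumber [IsArtinianRing R] (res : MinProjRes R M) {n b : ℕ}
    (h : HasBettiNumber res n b) : Module.length R (res.P n) ≤ b * Module.length R R := by
  obtain ⟨N, hN, hI⟩ := h
  rw [length_eq_sum_of_isInternal hN]
  calc ∑ i, Module.length R (N i) ≤ ∑ _i : Fin b, Module.length R R :=
        Finset.sum_le_sum fun i _ => by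
          have : Module.Projective R (N i) := by
            refine Module.Projective.of_split (N i).subtype
              (DirectSum.component R (Fin b) (fun i => N i) i ∘ₗ
                (LinearEquiv.ofBijective (DirectSum.coeLinearMap N) hN).symm.toLinearMap) ?_
            ext x
            simp only [LinearMap.comp_apply, LinearEquiv.coe_coe, Submodule.subtype_apply,
              LinearMap.id_apply]
            exact congrArg Subtype.val (hN.ofBijective_coeLinearMap_same x)
          exact length_le_of_indecomposable_projective (hI i)
    _ = b * Module.length R R := by simp

end Resolutions

/-! ### Powers of Ext classes -/

section Powers

variable {R M : Type} [Ring R] [AddCommGroup M] [Module R M]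

/-- `powDeg n j = j * n`, by a recursion which makes `powDeg n (j + 1) = n + powDeg n j` hold by
definition. -/
def powDeg (n : ℕ) : ℕ → ℕ
  | 0 => 0
  | j + 1 => n + powDeg n j

theorem le_powDeg {n : ℕ} (hn : 1 ≤ n) (j : ℕ) : j ≤ powDeg n j := by
  induction j with
  | zero => exact Nat.zero_le _
  | succ j ih => simp only [powDeg]; omega

/-- The cocycle `ε ∘ l ∘ ⋯ ∘ l` with `j` factors `l`; it represents the `j`-th power of the class whose
lifting is `l`. -/
def powCocycle (res : MinProjRes R M) (n : ℕ) (l : ∀ i, res.P (n + i) →ₗ[R] res.P i) :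
    ∀ j, res.P (powDeg n j) →ₗ[R] M
  | 0 => res.augment
  | j + 1 => powCocycle res n l j ∘ₗ l (powDeg n j)

theorem isCocycle_powCocycle (res : MinProjRes R M) {n : ℕ} {f : res.P n →ₗ[R] M}
    {l : ∀ i, res.P (n + i) →ₗ[R] res.P i} (hl : res.IsLifting n f l) (j : ℕ) :
    res.IsCocycle (powDeg n j) (powCocycle res n l j) := by
  induction j with
  | zero => exact res.augment_comp_d
  | succ j ih =>
    have h1 : powCocycle res n l j ∘ₗ res.d (powDeg n j) = 0 := ih
    change (powCocycle res n l j ∘ₗ l (powDeg n j)) ∘ₗ res.d (n + powDeg n j) = 0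
    rw [LinearMap.comp_assoc, ← hl.lift_comm, ← LinearMap.comp_assoc, h1, LinearMap.zero_comp]

theorem exists_isLifting (res : MinProjRes R M) {n : ℕ} {f : res.P n →ₗ[R] M}
    (hf : res.IsCocycle n f) : ∃ l, res.IsLifting n f l := by
  obtain ⟨l, h0, hl⟩ := res.exists_lift (Q := fun i => res.P (n + i)) (fun i => res.d (n + i))
    (fun i => res.d_comp_d (n + i)) f hf
  exact ⟨l, h0, hl⟩

theorem cls_powCocycle {k E : Type} [Field k] [Algebra k R] [Ring E] [Algebra k E]
    (EA : ExtAlgebraModel k R M E) {n : ℕ} {f : EA.res.P n →ₗ[R] M} (hf : EA.res.IsCocycle n f)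
    {l : ∀ i, EA.res.P (n + i) →ₗ[R] EA.res.P i} (hl : EA.res.IsLifting n f l) (j : ℕ) :
    EA.cls (powDeg n (j + 1)) (powCocycle EA.res n l (j + 1)) = EA.cls n f ^ (j + 1) := by
  induction j with
  | zero =>
    rw [zero_add, pow_one]
    exact congrArg (EA.cls n) hl.lift_zero
  | succ j ih =>
    rw [pow_succ, ← ih]
    exact EA.cls_mul _ f (isCocycle_powCocycle EA.res hl (j + 1)) hf l hl

theorem isNilpotent_cls_iff {k E : Type} [Field k] [Algebra k R] [Ring E] [Algebra k E]
    (EA : ExtAlgebraModel k R M E) {n : ℕ} {f : EA.res.P n →ₗ[R] M} (hf : EA.res.IsCocycle n f)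
    {l : ∀ i, EA.res.P (n + i) →ₗ[R] EA.res.P i} (hl : EA.res.IsLifting n f l) :
    IsNilpotent (EA.cls n f) ↔
      ∃ j, EA.res.IsCoboundary (powDeg n (j + 1)) (powCocycle EA.res n l (j + 1)) := by
  simp only [← EA.cls_eq_zero_iff _ _ (isCocycle_powCocycle EA.res hl _),
    cls_powCocycle EA hf hl]
  exact ⟨fun ⟨j, hj⟩ => ⟨j, by rw [pow_succ, hj, zero_mul]⟩, fun ⟨j, hj⟩ => ⟨j + 1, hj⟩⟩

end Powers

/-! ### The two implications -/

section Main

variable {R M : Type} [Ring R] [IsArtinianRing R] [AddCommGroup M] [Module R M]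

theorem hasComplexityOne_of_length_le (res : MinProjRes R M) (C : ℕ)
    (hC : ∀ i, Module.length R (res.P i) ≤ C) : HasComplexityOne R M := by
  refine ⟨res, C, fun n => ?_⟩
  obtain ⟨b, N, hb, hN, hI⟩ := exists_internal_indecomposable (R := R) (res.P n)
  exact ⟨b, by exact_mod_cast hb.trans (hC n), N, hN, hI⟩

theorem exists_length_le (hM : HasComplexityOne R M) (res : MinProjRes R M) :
    ∃ C : ℕ, ∀ i, Module.length R (res.P i) ≤ C := by
  obtain ⟨res', C, hC⟩ := hM
  refine ⟨C * (Module.length R R).toNat, fun i => ?_⟩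
  obtain ⟨l, -⟩ := res.exists_compare res'
  obtain ⟨b, hb, hB⟩ := hC i
  rw [← (l i).length_eq]
  refine (length_le_of_hasBettiNumber res' hB).trans ?_
  rw [Nat.cast_mul, ENat.natCast_toNat Module.length_ne_top]
  gcongr

theorem exists_length_le_of_periodic (res : MinProjRes R M) (m : ℕ)
    (e : ∀ i, res.P (m + 1 + i) ≃ₗ[R] res.P i) : ∃ C : ℕ, ∀ i, Module.length R (res.P i) ≤ C := by
  refine ⟨∑ i ∈ Finset.range (m + 1), (Module.length R (res.P i)).toNat, fun i => ?_⟩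
  induction i using Nat.strong_induction_on with
  | _ i ih =>
  by_cases hi : i < m + 1
  · rw [← ENat.natCast_toNat (Module.length_ne_top (R := R) (M := res.P i))]
    norm_cast
    exact Finset.single_le_sum (f := fun i => (Module.length R (res.P i)).toNat)
      (fun _ _ => Nat.zero_le _) (Finset.mem_range.mpr hi)
  · obtain ⟨i, rfl⟩ := Nat.exists_eq_add_of_le (not_lt.mp hi)
    rw [(e i).length_eq]
    exact ih i (by omega)

theorem complexityOne_and_nonNilpotent_of_periodic {k E : Type} [Field k] [Algebra k R] [Ring E]
    [Algebra k E] (EA : ExtAlgebraModel k R M E) [Nontrivial M] (h : IsPeriodicModule R M) :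
    HasComplexityOne R M ∧ EA.HasNonNilpotentOfPositiveDegree := by
  obtain ⟨m, ⟨φ⟩⟩ := h.exists_equiv EA.res
  -- the class of `P^{m+1} → Ω^{m+1} M ≃ M`
  let f : EA.res.P (m + 1) →ₗ[R] M := φ.toLinearMap ∘ₗ (EA.res.d m).rangeRestrict
  have hfs : Function.Surjective f :=
    φ.surjective.comp (EA.res.d m).surjective_rangeRestrict
  have hker : ker f = range (EA.res.d (m + 1)) := by
    rw [← EA.res.exact_succ]
    simp only [f]
    rw [LinearEquiv.ker_comp, LinearMap.ker_rangeRestrict]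
  have hf : EA.res.IsCocycle (m + 1) f := LinearMap.range_le_ker_iff.mp hker.ge
  obtain ⟨l, hl⟩ := exists_isLifting EA.res hf
  have hb : ∀ i, Function.Bijective (l i) :=
    EA.res.bijective_lift (Q := fun i => EA.res.P (m + 1 + i)) (fun i => EA.res.d (m + 1 + i))
      (fun i => EA.res.exact_succ (m + 1 + i)) (fun i => EA.res.range_d_le_radical (m + 1 + i))
      f hker hfs l hl.lift_zero hl.lift_comm
  obtain ⟨C, hC⟩ := exists_length_le_of_periodic EA.res m
    fun i => LinearEquiv.ofBijective (l i) (hb i)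
  refine ⟨hasComplexityOne_of_length_le EA.res C hC,
    m + 1, by omega, EA.cls (m + 1) f, EA.cls_mem _ _ hf, ?_⟩
  have hs : ∀ j, Function.Surjective (powCocycle EA.res (m + 1) l j) := by
    intro j
    induction j with
    | zero => exact EA.res.augment_surjective
    | succ j ih => exact ih.comp (hb _).2
  rw [isNilpotent_cls_iff EA hf hl]
  rintro ⟨j, hj⟩
  exact EA.res.not_isCoboundary_of_surjective
    (le_trans (by omega) (le_powDeg (by omega) (j + 1))) _ (hs _) hj

theorem periodic_of_complexityOne_of_nonNilpotent [Module.Injective R R] {k E : Type} [Field k]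
    [Algebra k R] [Ring E] [Algebra k E] (EA : ExtAlgebraModel k R M E)
    (hind : IsIndecomposableModule R M) (hM : HasComplexityOne R M)
    (hE : EA.HasNonNilpotentOfPositiveDegree) : IsPeriodicModule R M := by
  obtain ⟨n, hn, x, hx, hnil⟩ := hE
  obtain ⟨f, hf, rfl⟩ := EA.cls_surjective n x hx
  obtain ⟨l, hl⟩ := exists_isLifting EA.res hf
  rw [isNilpotent_cls_iff EA hf hl] at hnil
  push Not at hnil
  obtain ⟨C, hC⟩ := exists_length_le hM EA.res
  -- `G j : Ω^{jn} M → M` is induced by the cocycle representing the `j`-th power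
  let G : ∀ j, EA.res.Syz (powDeg n j) →ₗ[R] M := fun j =>
    (range (EA.res.d (powDeg n j))).liftQ (powCocycle EA.res n l j)
      (LinearMap.range_le_ker_iff.mpr (isCocycle_powCocycle EA.res hl j))
  let g : ∀ j, EA.res.Syz (powDeg n (j + 1)) →ₗ[R] EA.res.Syz (powDeg n j) := fun j =>
    (range (EA.res.d (n + powDeg n j))).mapQ (range (EA.res.d (powDeg n j))) (l (powDeg n j)) (by
      rintro _ ⟨y, rfl⟩
      exact ⟨l (powDeg n j + 1) y, LinearMap.congr_fun (hl.lift_comm (powDeg n j)) y⟩)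
  have hG : ∀ j, G (j + 1) = G j ∘ₗ g j := fun j => Submodule.linearMap_qext _ rfl
  have hne : Nontrivial M := hind.1
  have hG0 : ∀ j, G j ≠ 0 := by
    intro j h
    have hz : powCocycle EA.res n l j = 0 := by
      have := Submodule.liftQ_mkQ (range (EA.res.d (powDeg n j))) (powCocycle EA.res n l j)
        (LinearMap.range_le_ker_iff.mpr (isCocycle_powCocycle EA.res hl j))
      rw [← this]
      exact (congrArg (fun t => t ∘ₗ _) h).trans (LinearMap.zero_comp _)
    refine hnil j ?_
    have hz' : powCocycle EA.res n l (j + 1) = 0 :=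
      (congrArg (fun t => t ∘ₗ l (powDeg n j)) hz).trans (LinearMap.zero_comp _)
    rw [hz']
    exact EA.res.isCoboundary_zero _
  have hnt : ∀ i, Nontrivial (EA.res.Syz i) := fun i => by
    refine EA.res.nontrivial_syz (le_powDeg hn i) ?_
    by_contra hs
    rw [not_nontrivial_iff_subsingleton] at hs
    exact hG0 i (LinearMap.ext fun x => by rw [Subsingleton.elim x 0, map_zero, map_zero])
  obtain ⟨j, hj⟩ := exists_bijective_of_tower (X := fun j => EA.res.Syz (powDeg n j)) g
    (fun j => EA.res.indecomposable_syz hind hnt _) C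
    (fun j => (Module.length_le_of_surjective _ (Submodule.mkQ_surjective _)).trans (hC _))
    G hG hG0
  obtain ⟨e⟩ := EA.res.syz_descend_iterate hind hnt n (powDeg n j) (LinearEquiv.ofBijective (g j) hj)
  obtain ⟨m, rfl⟩ : ∃ m, n = m + 1 := ⟨n - 1, by omega⟩
  exact ⟨EA.res, m, ⟨(EA.res.syzSucc m).symm ≪≫ₗ e ≪≫ₗ EA.res.syzZero⟩⟩

end Main

/-- **Proposition 4.1.** Let `R` be a finite-dimensional selfinjective algebra over a
field `k` and let `M` be a finitely generated indecomposable `R`-module (with Yoneda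
Ext-algebra `Ext^*_R(M,M)` modelled by `EA` on the graded `k`-algebra `E`).  Then the
following are equivalent: (a) `M` is periodic; (b) `M` has complexity one and there
exists a non-nilpotent (homogeneous) element of positive degree in `Ext^*_R(M,M)`. -/
theorem periodic_iff_complexityOne_and_nonNilpotent
    {k R M E : Type} [Field k] [Ring R] [Algebra k R] [FiniteDimensional k R]
    [Module.Injective R R]
    [AddCommGroup M] [Module R M] [Module.Finite R M]
    (hind : IsIndecomposableModule R M)
    [Ring E] [Algebra k E] (EA : ExtAlgebraModel k R M E) :
    IsPeriodicModule R M ↔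
      (HasComplexityOne R M ∧ EA.HasNonNilpotentOfPositiveDegree) := by
  have : IsArtinianRing R := IsArtinianRing.of_finite k R
  have := hind.1
  exact ⟨complexityOne_and_nonNilpotent_of_periodic EA,
    fun h => periodic_of_complexityOne_of_nonNilpotent EA hind h.1 h.2⟩
end

section
/- Let S be a graded algebra over a field k such that S is a finitely generated module over its graded center Z_gr(S). If S_{≥1} = ⊕_{n≥1} S_n contains a non-nilpotent element, then Z_gr(S)_{≥1} contains a non-nilpotent element. -/
/-!
Suppose every element of `Z_gr(S)_{≥1}` is nilpotent, and let `J` be the left ideal of `S`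
generated by the homogeneous graded-central elements of positive degree. Such an element `t`
satisfies `t S ⊆ S t`, so `J` is two-sided, and `S t` is a nil ideal because
`(a t)ⁿ ∈ S tⁿ`. As a sum of two nil two-sided ideals is nil, `J` is nil
(`gradedCentralIdeal_nil`).

Every element of `Z_gr(S)` is congruent modulo `J` to an element of degree `0`. Hence, if
`s₁, …, s_r` generate `S` over `Z_gr(S)` and have no components in degrees above `d`, then
`S = S_{≤ d} + J`. Since `J` is homogeneous, `Sₙ ⊆ J` for all `n > d`
(`exists_degree_bound`). For `x ∈ S_{≥1}` the power `x^{d+1}` lies in `S_{≥ d+1} ⊆ J`, so `x`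
is nilpotent.
-/

/-- A (positively) graded `k`-algebra `S = S₀ ⊕ S₁ ⊕ ⋯`, given by its `k`-subspaces
`piece n = Sₙ`, with `1 ∈ S₀`, `Sₘ · Sₙ ⊆ S_{m+n}` and `S = ⊕ₙ Sₙ`. -/
structure GradedKAlgebra (k : Type) [Field k] (S : Type) [Ring S] [Algebra k S] where
  piece : ℕ → Submodule k S
  internal : DirectSum.IsInternal piece
  one_mem : (1 : S) ∈ piece 0
  mul_mem : ∀ {m n : ℕ} {x y : S}, x ∈ piece m → y ∈ piece n → x * y ∈ piece (m + n)

/-- The graded center `Z_gr(S)` of a graded algebra `S`: the graded subring (here, the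
`k`-subalgebra) generated by all homogeneous elements `u` such that
`u v = (-1)^{|u||v|} v u` for every homogeneous element `v` of `S`. -/
def GradedKAlgebra.gradedCenter {k : Type} [Field k] {S : Type} [Ring S] [Algebra k S]
    (G : GradedKAlgebra k S) : Subalgebra k S :=
  Algebra.adjoin k
    {u : S | ∃ n : ℕ, u ∈ G.piece n ∧
      ∀ (m : ℕ), ∀ v ∈ G.piece m, u * v = (-1 : S) ^ (n * m) * (v * u)}

/-- The positive-degree part `S_{≥1} = ⊕_{n≥1} Sₙ` of a graded algebra. -/
def GradedKAlgebra.positivePart {k : Type} [Field k] {S : Type} [Ring S] [Algebra k S]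
    (G : GradedKAlgebra k S) : Submodule k S :=
  ⨆ (n : ℕ) (_ : 1 ≤ n), G.piece n

namespace GradedKAlgebra

section NilIdeals

variable {S : Type} [Ring S]

/-- `x` lies in some nil two-sided ideal, i.e. in the upper nilradical of `S`. -/
def InNilIdeal (x : S) : Prop :=
  ∃ I : Ideal S, I.IsTwoSided ∧ x ∈ I ∧ ∀ y ∈ I, IsNilpotent y

theorem InNilIdeal.isNilpotent {x : S} (h : InNilIdeal x) : IsNilpotent x := by
  obtain ⟨I, -, hx, hI⟩ := h
  exact hI x hx

theorem InNilIdeal.mul_left {x : S} (h : InNilIdeal x) (a : S) : InNilIdeal (a * x) := by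
  obtain ⟨I, h2, hx, hI⟩ := h
  exact ⟨I, h2, I.mul_mem_left a hx, hI⟩

theorem InNilIdeal.add {x y : S} (hx : InNilIdeal x) (hy : InNilIdeal y) :
    InNilIdeal (x + y) := by
  obtain ⟨I, hI2, hxI, hI⟩ := hx
  obtain ⟨K, hK2, hyK, hK⟩ := hy
  refine ⟨I ⊔ K, ?_, Submodule.add_mem_sup hxI hyK, ?_⟩
  · refine ⟨fun {a} b ha => ?_⟩
    obtain ⟨i, hi, j, hj, rfl⟩ := Submodule.mem_sup.1 ha
    rw [add_mul]
    exact Submodule.add_mem_sup (I.mul_mem_right b hi) (K.mul_mem_right b hj)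
  · intro z hz
    obtain ⟨i, hi, j, hj, rfl⟩ := Submodule.mem_sup.1 hz
    obtain ⟨n, hn⟩ := hK j hj
    -- `i + j` and `j` agree in `S ⧸ I`, so `(i + j) ^ n ∈ I`.
    have hmem : (i + j) ^ n ∈ I := by
      rw [← Ideal.Quotient.eq_zero_iff_mem, map_pow, map_add,
        Ideal.Quotient.eq_zero_iff_mem.2 hi, zero_add, ← map_pow, hn, map_zero]
    obtain ⟨m, hm⟩ := hI _ hmem
    exact ⟨n * m, by rw [pow_mul, hm]⟩

theorem inNilIdeal_of_swap {t : S} (ht : IsNilpotent t) (hsw : ∀ b, ∃ b', t * b = b' * t) :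
    InNilIdeal t := by
  refine ⟨Ideal.span {t}, ⟨fun {a} b ha => ?_⟩, Ideal.mem_span_singleton_self t, ?_⟩
  · obtain ⟨c, rfl⟩ := Ideal.mem_span_singleton'.1 ha
    obtain ⟨b', hb'⟩ := hsw b
    exact Ideal.mem_span_singleton'.2 ⟨c * b', by rw [mul_assoc, mul_assoc, hb']⟩
  · intro y hy
    obtain ⟨c, rfl⟩ := Ideal.mem_span_singleton'.1 hy
    have key : ∀ n : ℕ, ∃ b, (c * t) ^ n = b * t ^ n := by
      intro n
      induction n with
      | zero => exact ⟨1, by simp⟩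
      | succ n ih =>
        obtain ⟨b, hb⟩ := ih
        obtain ⟨b', hb'⟩ := hsw b
        refine ⟨c * b', ?_⟩
        rw [pow_succ', hb, pow_succ', mul_assoc, ← mul_assoc t, hb']
        simp only [mul_assoc]
    obtain ⟨n, hn⟩ := ht
    obtain ⟨b, hb⟩ := key n
    exact ⟨n, by rw [hb, hn, mul_zero]⟩

end NilIdeals

variable {k : Type} [Field k] {S : Type} [Ring S] [Algebra k S] (G : GradedKAlgebra k S)

/-- `u`, regarded as an element of degree `n`, commutes up to the Koszul sign with every
homogeneous element. -/
def IsGradedCentral (n : ℕ) (u : S) : Prop :=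
  ∀ (m : ℕ), ∀ v ∈ G.piece m, u * v = (-1 : S) ^ (n * m) * (v * u)

/-- The left ideal generated by the homogeneous graded-central elements of positive degree. -/
def gradedCentralIdeal : Ideal S :=
  Ideal.span {u : S | ∃ n : ℕ, 1 ≤ n ∧ u ∈ G.piece n ∧ G.IsGradedCentral n u}

/-- The grading of `S` in Mathlib's form. -/
noncomputable abbrev toGradedRing : GradedRing G.piece :=
  { G.internal.chooseDecomposition with
    one_mem := G.one_mem
    mul_mem := fun _ _ _ _ hx hy => G.mul_mem hx hy }

theorem piece_induction {p : S → Prop} (h0 : p 0) (hadd : ∀ x y, p x → p y → p (x + y))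
    (hom : ∀ n, ∀ x ∈ G.piece n, p x) (x : S) : p x := by
  have hx : x ∈ ⨆ n, G.piece n := by
    rw [G.internal.submodule_iSup_eq_top]; trivial
  exact Submodule.iSup_induction G.piece (motive := p) hx hom h0 hadd

variable {G}

theorem IsGradedCentral.swap {n : ℕ} {u : S} (h : G.IsGradedCentral n u) (b : S) :
    ∃ b', u * b = b' * u := by
  induction b using G.piece_induction with
  | h0 => exact ⟨0, by simp⟩
  | hadd x y hx hy =>
    obtain ⟨x', hx⟩ := hx
    obtain ⟨y', hy⟩ := hy
    exact ⟨x' + y', by rw [mul_add, add_mul, hx, hy]⟩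
  | hom m v hv => exact ⟨(-1) ^ (n * m) * v, by rw [h m v hv, mul_assoc]⟩

variable (G)

theorem gradedCentralIdeal_mul_mem {x : S} (hx : x ∈ G.gradedCentralIdeal) (b : S) :
    x * b ∈ G.gradedCentralIdeal := by
  unfold gradedCentralIdeal at hx
  induction hx using Submodule.span_induction generalizing b with
  | mem u hu =>
    obtain ⟨b', hb'⟩ := (hu.choose_spec.2.2).swap b
    rw [hb']
    exact Ideal.mul_mem_left _ _ (Ideal.subset_span hu)
  | zero => rw [zero_mul]; exact Ideal.zero_mem _
  | add x y _ _ hx hy => rw [add_mul]; exact Ideal.add_mem _ (hx b) (hy b)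
  | smul a x _ hx => rw [smul_eq_mul, mul_assoc]; exact Ideal.mul_mem_left _ _ (hx b)

theorem gradedCentralIdeal_nil
    (H : ∀ n, 1 ≤ n → ∀ u ∈ G.piece n, G.IsGradedCentral n u → IsNilpotent u)
    {x : S} (hx : x ∈ G.gradedCentralIdeal) : IsNilpotent x := by
  apply InNilIdeal.isNilpotent
  unfold gradedCentralIdeal at hx
  induction hx using Submodule.span_induction with
  | mem u hu =>
    obtain ⟨n, hn, hun, hu⟩ := hu
    exact inNilIdeal_of_swap (H n hn u hun hu) hu.swap
  | zero => exact inNilIdeal_of_swap IsNilpotent.zero fun b => ⟨0, by simp⟩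
  | add x y _ _ hx hy => exact hx.add hy
  | smul a x _ hx => exact hx.mul_left a

theorem gradedCenter_eq_zero_add {c : S} (hc : c ∈ G.gradedCenter) :
    ∃ c₀ ∈ G.piece 0, c - c₀ ∈ G.gradedCentralIdeal := by
  unfold gradedCenter at hc
  induction hc using Algebra.adjoin_induction with
  | mem u hu =>
    obtain ⟨n, hn, hu⟩ := hu
    rcases Nat.eq_zero_or_pos n with rfl | hpos
    · exact ⟨u, hn, by rw [sub_self]; exact Ideal.zero_mem _⟩
    · exact ⟨0, Submodule.zero_mem _, by
        rw [sub_zero]; exact Ideal.subset_span ⟨n, hpos, hn, hu⟩⟩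
  | algebraMap r =>
    refine ⟨algebraMap k S r, ?_, by rw [sub_self]; exact Ideal.zero_mem _⟩
    rw [Algebra.algebraMap_eq_smul_one]
    exact Submodule.smul_mem _ _ G.one_mem
  | add x y _ _ hx hy =>
    obtain ⟨a, ha, hxa⟩ := hx
    obtain ⟨b, hb, hyb⟩ := hy
    exact ⟨a + b, Submodule.add_mem _ ha hb, by
      rw [add_sub_add_comm]; exact Ideal.add_mem _ hxa hyb⟩
  | mul x y _ _ hx hy =>
    obtain ⟨a, ha, hxa⟩ := hx
    obtain ⟨b, hb, hyb⟩ := hy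
    refine ⟨a * b, G.mul_mem ha hb, ?_⟩
    have : x * y - a * b = (x - a) * y + a * (y - b) := by noncomm_ring
    rw [this]
    exact Ideal.add_mem _ (G.gradedCentralIdeal_mul_mem hxa y) (Ideal.mul_mem_left _ _ hyb)

/-- If `S` is finite over its graded center, all components of large degree lie in the ideal
generated by the graded-central elements of positive degree. -/
theorem exists_degree_bound
    (hfg : ∃ s : Finset S, ∀ y : S,
      ∃ c : {x // x ∈ s} → S, (∀ i, c i ∈ G.gradedCenter) ∧
        y = ∑ i ∈ s.attach, c i * (i : S)) :
    ∃ d : ℕ, ∀ n, d < n → ∀ y ∈ G.piece n, y ∈ G.gradedCentralIdeal := by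
  classical
  let := G.toGradedRing
  obtain ⟨s, hs⟩ := hfg
  refine ⟨s.sup fun x => (DirectSum.decompose G.piece x).support.sup id, ?_⟩
  intro n hn y hy
  obtain ⟨c, hc, hyc⟩ := hs y
  choose c₀ hc₀ hcJ using fun i => G.gradedCenter_eq_zero_add (hc i)
  have hJ : y - ∑ i ∈ s.attach, c₀ i * (i : S) ∈ G.gradedCentralIdeal := by
    rw [hyc, ← Finset.sum_sub_distrib]
    refine Ideal.sum_mem _ fun i _ => ?_
    rw [← sub_mul]
    exact G.gradedCentralIdeal_mul_mem (hcJ i) _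
  have hhom : G.gradedCentralIdeal.IsHomogeneous G.piece := by
    refine Ideal.homogeneous_span _ _ fun u hu => ?_
    obtain ⟨m, -, hm, -⟩ := hu
    exact ⟨m, hm⟩
  have hproj : ∀ i : {x // x ∈ s},
      (DirectSum.decompose G.piece (c₀ i * (i : S)) n : S) = 0 := by
    intro i
    have h1 := DirectSum.coe_decompose_mul_add_of_left_mem G.piece (j := n) (b := (i : S)) (hc₀ i)
    rw [zero_add] at h1
    rw [h1]
    have h2 : n ∉ (DirectSum.decompose G.piece (i : S)).support := by
      intro hmem
      have h3 := Finset.le_sup (f := id) hmem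
      have h4 := Finset.le_sup
        (f := fun x => (DirectSum.decompose G.piece x).support.sup id) i.2
      exact absurd hn (not_lt.2 (h3.trans h4))
    rw [DFinsupp.notMem_support_iff.1 h2, ZeroMemClass.coe_zero, mul_zero]
  have h5 := hhom n hJ
  rw [DirectSum.decompose_sub, DirectSum.decompose_sum] at h5
  simpa [-DirectSum.decompose_mul, DFinsupp.finsetSum_apply, hproj,
    DirectSum.decompose_of_mem_same _ hy, DirectSum.sub_apply] using h5

/-- `S_{≥ N}`. -/
def degreeGE (N : ℕ) : Submodule k S :=
  ⨆ (n : ℕ) (_ : N ≤ n), G.piece n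

theorem piece_le_degreeGE {N n : ℕ} (h : N ≤ n) : G.piece n ≤ G.degreeGE N :=
  le_iSup₂_of_le n h le_rfl

theorem degreeGE_mul_le (a b : ℕ) : G.degreeGE a * G.degreeGE b ≤ G.degreeGE (a + b) := by
  unfold degreeGE
  simp only [Submodule.iSup_mul, Submodule.mul_iSup]
  refine iSup₂_le fun n hn => iSup₂_le fun m hm => Submodule.mul_le.2 fun x hx y hy => ?_
  exact G.piece_le_degreeGE (add_le_add hm hn) (G.mul_mem hx hy)

theorem pow_mem_degreeGE {x : S} (hx : x ∈ G.positivePart) (N : ℕ) : x ^ N ∈ G.degreeGE N := by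
  induction N with
  | zero => rw [pow_zero]; exact G.piece_le_degreeGE le_rfl G.one_mem
  | succ N ih =>
    rw [pow_succ]
    exact G.degreeGE_mul_le N 1 (Submodule.mul_mem_mul ih hx)

end GradedKAlgebra

/-- **Proposition 4.9.** Let `S` be a graded algebra over a field `k` such that `S` is a
finitely generated module over its graded center `Z_gr(S)` (hypothesis `hfg`: there is a
finite set `s` of elements of `S` such that every element of `S` is a finite
`Z_gr(S)`-linear combination of elements of `s`).  If `S_{≥1}` contains a non-nilpotent
element, then `Z_gr(S)_{≥1}` contains a non-nilpotent element. -/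
theorem gradedCenter_positivePart_nonnilpotent
    {k : Type} [Field k] {S : Type} [Ring S] [Algebra k S] (G : GradedKAlgebra k S)
    (hfg : ∃ s : Finset S, ∀ y : S,
      ∃ c : {x // x ∈ s} → S, (∀ i, c i ∈ G.gradedCenter) ∧
        y = ∑ i ∈ s.attach, c i * (i : S))
    (hnn : ∃ x ∈ G.positivePart, ¬ IsNilpotent x) :
    ∃ z, z ∈ G.gradedCenter ∧ z ∈ G.positivePart ∧ ¬ IsNilpotent z := by
  by_contra! hcon
  have H : ∀ n, 1 ≤ n → ∀ u ∈ G.piece n, G.IsGradedCentral n u → IsNilpotent u :=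
    fun n hn u hun hu => hcon u (Algebra.subset_adjoin ⟨n, hun, hu⟩) (G.piece_le_degreeGE hn hun)
  obtain ⟨x, hx, hxn⟩ := hnn
  obtain ⟨d, hd⟩ := G.exists_degree_bound hfg
  have hle : G.degreeGE (d + 1) ≤ G.gradedCentralIdeal.restrictScalars k :=
    iSup₂_le fun n hn y hy => hd n hn y hy
  obtain ⟨m, hm⟩ := G.gradedCentralIdeal_nil H (hle (G.pow_mem_degreeGE hx (d + 1)))
  exact hxn ⟨(d + 1) * m, by rw [pow_mul, hm]⟩
end
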